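/- Let H_ω be a weighted analytic Hilbert space and let φ be an analytic self-map of the unit disk D which is a symbol for H_ω and satisfies that the closure of φ(D) is contained in D. Then the limit β(C_φ) := lim_{n→∞} [a_n(C_φ)]^{1/n} exists, and β(C_φ) = e^{−1/capa(φ(D))}, where capa(φ(D)) is the Green capacity of φ(D) in D. -/

import Mathlib

/-!
Write `E_N` for the minimum of the discrete Green energy `∑_{i ≠ k} g(x_i, x_k)` over configurations
of `N` points of the compact set `K = φ({|z| ≤ r})`, with `r < 1` close to `1`. In terms of Blaschke
factors `b_w(z) = (z - w) / (1 - w̄ z)` it is `-log ∏_{i ≠ k} |b_{x_i}(x_k)|`, which is `-log` of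
`pprod` at an extremal configuration. The two ends of the proof meet in the fact that
`N² V(φ(D)) - O(N) ≤ E_N ≤ N² (V(φ(D)) + ε)` (`exists_extremal`). The upper bound averages the
discrete energy over independent points whose law has almost minimal energy
(`exists_config_of_energy`). The lower bound spreads the point masses over small circles, which
stay in `φ(D)` because `φ(D)` is open, and does not increase the mutual energies
(`greenV_le_of_config`).

Lower bound for `a_n` (`lower_rate`). For an extremal configuration of `N + 1` points, the Blaschke
products leaving out one point have at that point modulus at least `exp (-(E_{N+1} - E_N) / 2)`. Under
`C_φ` they become an almost diagonal system with respect to the evaluations at preimages of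
the points, so `a_{N+1}` is at least this number up to a factor of order `N²`
(`exists_lower_config`). Since `E_N ~ N² V`, averaging the increments over a short window above `n`
yields one of size at most `2 n (V + ε)` (`exists_small_increment`), and `a_n` is decreasing.

Upper bound for `a_n` (`upper_rate`). Among `m + 1` extremal points there is one for which the
Blaschke product of the other `m` is at most `exp (-E_{m+1} / (m + 1))` on `K`. Such a bound
propagates to a neighbourhood of `φ(D)` with arbitrarily small loss in the exponent: `K` is connected,
so it meets all small circles around each of its points, and Lagrange interpolation there gives a
uniform two-constants estimate (`exists_two_constants`). A function vanishing at these `m` points is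
dominated near `φ(D)` by its norm times the Blaschke product, up to `e^{ε m}`, by the maximum
principle on a circle of radius close to `1`. Hence `C_φ` is small on a subspace of codimension `m`,
and compressing by the orthogonal projection bounds `a_{m+1}` (`exists_upper_config`).

If `φ` is constant, `C_φ` has rank one and a point carries no measure of finite energy, so both sides
vanish; otherwise `φ` is an open map, which is what the above uses.
-/

open MeasureTheory Set Filter
open scoped ENNReal NNReal

noncomputable section

/-- The open unit disk in the complex plane. -/
def unitDisk : Set ℂ := {z : ℂ | ‖z‖ < 1}

/-- The Green function of the unit disk, `g(z,w) = log |(1 - w̄ z)/(z - w)|`,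
with value `⊤` on the diagonal. -/
def greenFnE (z w : ℂ) : ℝ≥0∞ :=
  if z = w then ⊤ else ENNReal.ofReal (Real.log ‖(1 - (starRingEnd ℂ) w * z) / (z - w)‖)

/-- The Green energy `I(μ) = ∬ g(z,w) dμ(z) dμ(w)` of a measure. -/
def greenEnergy (μ : Measure ℂ) : ℝ≥0∞ := ∫⁻ z, ∫⁻ w, greenFnE z w ∂μ ∂μ

/-- `greenV E = V(E)`: the infimum of energies of probability measures supported by a
compact subset of `E`. -/
def greenV (E : Set ℂ) : ℝ≥0∞ :=
  ⨅ (μ : Measure ℂ) (_ : IsProbabilityMeasure μ)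
    (_ : ∃ K : Set ℂ, K ⊆ E ∧ IsCompact K ∧ μ Kᶜ = 0), greenEnergy μ

/-- The Green capacity `capa(E) = 1/V(E)` of `E` in the unit disk. -/
def greenCapa (E : Set ℂ) : ℝ≥0∞ := (greenV E)⁻¹

/-- `e^{-1/capa(E)} = e^{-V(E)}`, with the value `0` when `V(E) = ∞` (i.e. `capa(E) = 0`). -/
def expNegV (E : Set ℂ) : ℝ :=
  if greenV E = ⊤ then 0 else Real.exp (-(greenV E).toReal)

/-- The pseudo-hyperbolic distance on the unit disk. -/
def pseudoDist (z w : ℂ) : ℝ := ‖(z - w) / (1 - (starRingEnd ℂ) z * w)‖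

/-- The pseudo-hyperbolic diameter of a set. -/
def pseudoDiam (E : Set ℂ) : ℝ :=
  sSup {d : ℝ | ∃ z ∈ E, ∃ w ∈ E, d = pseudoDist z w}

/-- The `n`-th approximation number `a_n(T) = inf {‖T - R‖ : rank R < n}`. -/
def approxNumber {E F : Type*} [NormedAddCommGroup E] [NormedAddCommGroup F]
    [NormedSpace ℂ E] [NormedSpace ℂ F] (T : E →L[ℂ] F) (n : ℕ) : ℝ :=
  sInf {c : ℝ | ∃ R : E →L[ℂ] F,
    Module.rank ℂ (LinearMap.range (R : E →ₗ[ℂ] F)) < (n : Cardinal) ∧ c = ‖T - R‖}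

/-- The squared norm `‖f‖² = |f(0)|² + ∫_D |f'|² ω dA` (normalized area measure) of the
weighted analytic Hilbert space `H_ω`. -/
def hwNormSq (ω : ℝ → ℝ) (f : ℂ → ℂ) : ℝ :=
  ‖f 0‖ ^ 2 + (∫ z in unitDisk, ‖deriv f z‖ ^ 2 * ω ‖z‖) / Real.pi

/-- Membership in the weighted analytic Hilbert space `H_ω`. -/
def memHw (ω : ℝ → ℝ) (f : ℂ → ℂ) : Prop :=
  DifferentiableOn ℂ f unitDisk ∧
    IntegrableOn (fun z => ‖deriv f z‖ ^ 2 * ω ‖z‖) unitDisk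

/-- The coefficient weights `w_0 = 1`, `w_n = 2 n² ∫_0^1 r^{2n-1} ω(r) dr`. -/
def wcoef (ω : ℝ → ℝ) (n : ℕ) : ℝ :=
  if n = 0 then 1 else 2 * (n : ℝ) ^ 2 * ∫ r in (0:ℝ)..1, r ^ (2 * n - 1) * ω r

/-- Taylor coefficient of `f` at `0`. -/
def taylorCoeff (f : ℂ → ℂ) (n : ℕ) : ℂ := iteratedDeriv n f 0 / (n.factorial : ℂ)

/-- `(1/2π) ∫_0^{2π} |f(r e^{it})|^p dt`. -/
def hpMean (p : ℝ) (f : ℂ → ℂ) (r : ℝ) : ℝ :=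
  (1 / (2 * Real.pi)) *
    ∫ t in (0:ℝ)..(2 * Real.pi), ‖f ((r : ℂ) * Complex.exp ((t : ℂ) * Complex.I))‖ ^ p

/-- The `H^p` norm. -/
def hpNorm (p : ℝ) (f : ℂ → ℂ) : ℝ :=
  sSup {m : ℝ | ∃ r ∈ Set.Ioo (0:ℝ) 1, m = hpMean p f r ^ (1 / p)}

/-- Membership in the Hardy space `H^p`. -/
def memHp (p : ℝ) (f : ℂ → ℂ) : Prop :=
  DifferentiableOn ℂ f unitDisk ∧
    BddAbove {m : ℝ | ∃ r ∈ Set.Ioo (0:ℝ) 1, m = hpMean p f r ^ (1 / p)}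

/-- The squared `H²` norm `‖f‖² = Σ |b_n|²` in terms of Taylor coefficients. -/
def h2NormSq (f : ℂ → ℂ) : ℝ := ∑' n : ℕ, ‖taylorCoeff f n‖ ^ 2

/-- Membership in the Hardy space `H²`. -/
def memH2 (f : ℂ → ℂ) : Prop :=
  DifferentiableOn ℂ f unitDisk ∧ Summable (fun n : ℕ => ‖taylorCoeff f n‖ ^ 2)

/-- The `n`-th Kolmogorov number. -/
def kolmogorovNumber {E F : Type*} [NormedAddCommGroup E] [NormedAddCommGroup F]
    [NormedSpace ℂ E] [NormedSpace ℂ F] (T : E →L[ℂ] F) (n : ℕ) : ℝ :=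
  ⨅ (S : Submodule ℂ F) (_ : Module.rank ℂ S < (n : Cardinal)),
    ⨆ x : {x : E // ‖x‖ ≤ 1}, Metric.infDist (T (x : E)) (S : Set F)

/-- The `n`-th Gelfand number: infimum of norms of restrictions of `T` to closed
subspaces of codimension `< n`. -/
def gelfandNumber {X : Type*} [NormedAddCommGroup X] [NormedSpace ℂ X]
    (T : X →L[ℂ] X) (n : ℕ) : ℝ :=
  ⨅ (F : Submodule ℂ X) (_ : IsClosed (F : Set X))
    (_ : Module.rank ℂ (X ⧸ F) < (n : Cardinal)),
    ⨆ x : {x : X // x ∈ F ∧ ‖x‖ ≤ 1}, ‖T (x : X)‖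

/-- `ε_n(T) = inf_{dim E < n} sup_{x ∈ B_X} dist (T x, T(E))`. -/
def epsApprox {X : Type*} [NormedAddCommGroup X] [NormedSpace ℂ X]
    (T : X →L[ℂ] X) (n : ℕ) : ℝ :=
  ⨅ (E : Submodule ℂ X) (_ : Module.rank ℂ E < (n : Cardinal)),
    ⨆ x : {x : X // ‖x‖ ≤ 1}, Metric.infDist (T (x : X)) (T '' (E : Set X))


/-! ### Blaschke factors -/

/-- The Blaschke factor `(z - w) / (1 - w̄ z)` of the disk with zero `w`. -/
def bf (w z : ℂ) : ℂ := (z - w) / (1 - (starRingEnd ℂ) w * z)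

lemma one_sub_conj_mul_ne {w z : ℂ} (hw : ‖w‖ < 1) (hz : ‖z‖ ≤ 1) :
    1 - (starRingEnd ℂ) w * z ≠ 0 := by
  intro h
  have h1 : (starRingEnd ℂ) w * z = 1 := (sub_eq_zero.mp h).symm
  have h2 : ‖w‖ * ‖z‖ = 1 := by
    have := congrArg norm h1
    simpa using this
  nlinarith [norm_nonneg w, norm_nonneg z]

lemma norm_one_sub_symm (w z : ℂ) :
    ‖1 - (starRingEnd ℂ) w * z‖ = ‖1 - (starRingEnd ℂ) z * w‖ := by
  rw [← Complex.norm_conj]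
  congr 1
  simp [mul_comm]

lemma one_sub_norm_bf_sq {w z : ℂ} (hw : ‖w‖ < 1) (hz : ‖z‖ ≤ 1) :
    1 - ‖bf w z‖ ^ 2 =
      (1 - ‖w‖ ^ 2) * (1 - ‖z‖ ^ 2) / ‖1 - (starRingEnd ℂ) w * z‖ ^ 2 := by
  have h := one_sub_conj_mul_ne hw hz
  have h' : ‖1 - (starRingEnd ℂ) w * z‖ ^ 2 ≠ 0 := by positivity
  rw [bf, norm_div, div_pow, eq_div_iff h', sub_mul, div_mul_cancel₀ _ h']
  rw [← Complex.normSq_eq_norm_sq, ← Complex.normSq_eq_norm_sq, ← Complex.normSq_eq_norm_sq,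
    ← Complex.normSq_eq_norm_sq]
  simp only [Complex.normSq_apply, Complex.sub_re, Complex.sub_im, Complex.mul_re, Complex.mul_im,
    Complex.conj_re, Complex.conj_im, Complex.one_re, Complex.one_im]
  ring

lemma norm_bf_le_one {w z : ℂ} (hw : ‖w‖ < 1) (hz : ‖z‖ ≤ 1) : ‖bf w z‖ ≤ 1 := by
  have h := one_sub_norm_bf_sq hw hz
  have h2 : 0 ≤ (1 - ‖w‖ ^ 2) * (1 - ‖z‖ ^ 2) / ‖1 - (starRingEnd ℂ) w * z‖ ^ 2 := by
    apply div_nonneg _ (sq_nonneg _)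
    apply mul_nonneg <;> nlinarith [norm_nonneg w, norm_nonneg z]
  nlinarith [norm_nonneg (bf w z)]

lemma norm_bf_symm (w z : ℂ) : ‖bf w z‖ = ‖bf z w‖ := by
  rw [bf, bf, norm_div, norm_div, norm_one_sub_symm, norm_sub_rev]

lemma bf_self (w : ℂ) : bf w w = 0 := by simp [bf]

lemma bf_ne_zero {w z : ℂ} (hw : ‖w‖ < 1) (hz : ‖z‖ ≤ 1) (h : z ≠ w) : bf w z ≠ 0 :=
  div_ne_zero (sub_ne_zero.mpr h) (one_sub_conj_mul_ne hw hz)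

lemma isOpen_unitDisk : IsOpen unitDisk := by
  have : unitDisk = Metric.ball 0 1 := by ext; simp [unitDisk]
  rw [this]; exact Metric.isOpen_ball

lemma bf_hasDerivAt {w z : ℂ} (hw : ‖w‖ < 1) (hz : ‖z‖ ≤ 1) :
    HasDerivAt (bf w) ((1 - ‖w‖ ^ 2 : ℝ) / (1 - (starRingEnd ℂ) w * z) ^ 2) z := by
  have h := one_sub_conj_mul_ne hw hz
  have h1 : HasDerivAt (fun z : ℂ => z - w) 1 z := (hasDerivAt_id z).sub_const w
  have h2 : HasDerivAt (fun z : ℂ => 1 - (starRingEnd ℂ) w * z) (-((starRingEnd ℂ) w * 1)) z :=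
    ((hasDerivAt_id z).const_mul _).const_sub 1
  refine (h1.div h2 h).congr_deriv ?_
  congr 1
  have : ((‖w‖ ^ 2 : ℝ) : ℂ) = (starRingEnd ℂ) w * w := by
    rw [← Complex.normSq_eq_norm_sq, Complex.normSq_eq_conj_mul_self]
  rw [Complex.ofReal_sub, this]
  push_cast
  ring

lemma bf_differentiableOn {w : ℂ} (hw : ‖w‖ < 1) : DifferentiableOn ℂ (bf w) unitDisk :=
  fun _ hz => (bf_hasDerivAt hw (le_of_lt hz)).differentiableAt.differentiableWithinAt

lemma norm_one_sub_ge {r : ℝ} {w z : ℂ} (hw : ‖w‖ ≤ r) (hz : ‖z‖ ≤ 1) :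
    1 - r ≤ ‖1 - (starRingEnd ℂ) w * z‖ := by
  have h := norm_sub_norm_le (1 : ℂ) ((starRingEnd ℂ) w * z)
  rw [norm_mul, norm_one, Complex.norm_conj] at h
  nlinarith [norm_nonneg w, norm_nonneg z]

lemma norm_deriv_bf_le {r : ℝ} (hr : r < 1) {w z : ℂ} (hw : ‖w‖ ≤ r) (hz : ‖z‖ ≤ 1) :
    ‖deriv (bf w) z‖ ≤ 1 / (1 - r) ^ 2 := by
  have hw1 := hw.trans_lt hr
  rw [(bf_hasDerivAt hw1 hz).deriv, norm_div, norm_pow]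
  have h := norm_one_sub_ge hw hz
  apply div_le_div₀ zero_le_one _ (by nlinarith) (by nlinarith)
  rw [Complex.norm_real, Real.norm_eq_abs, abs_le]
  constructor <;> nlinarith [norm_nonneg w]

/-- Near the unit circle a Blaschke factor whose zero stays in a fixed compact subset of the disk
is almost unimodular. -/
lemma exists_radius_bf_ge {r ε : ℝ} (hr0 : 0 ≤ r) (hr : r < 1) (hε : 0 < ε) :
    ∃ R, r < R ∧ R < 1 ∧ ∀ t w : ℂ, ‖t‖ = R → ‖w‖ ≤ r → Real.exp (-ε) ≤ ‖bf w t‖ := by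
  have he : Real.exp (-ε) < 1 := by simpa using hε
  set κ := (1 - Real.exp (-ε)) * (1 - r) ^ 2 / 2 with hκ
  have hκ0 : 0 < κ := by
    have : 0 < 1 - r := by linarith
    have : 0 < 1 - Real.exp (-ε) := by linarith
    positivity
  refine ⟨max ((r + 1) / 2) (1 - κ), ?_, ?_, ?_⟩
  · exact lt_max_of_lt_left (by linarith)
  · exact max_lt (by linarith) (by linarith)
  · intro t w ht hw
    set R := max ((r + 1) / 2) (1 - κ) with hR
    have hR1 : R < 1 := max_lt (by linarith) (by linarith)
    have hRκ : 1 - κ ≤ R := le_max_right _ _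
    have hR0 : 0 ≤ R := le_trans (by linarith) (le_max_left ((r + 1) / 2) (1 - κ))
    have hw1 := hw.trans_lt hr
    have ht1 : ‖t‖ ≤ 1 := by rw [ht]; exact hR1.le
    have h := one_sub_norm_bf_sq hw1 ht1
    have hle := norm_bf_le_one hw1 ht1
    have hd := norm_one_sub_ge hw ht1
    have h1r : 0 < 1 - r := by linarith
    have hb : (1 - ‖w‖ ^ 2) * (1 - ‖t‖ ^ 2) / ‖1 - (starRingEnd ℂ) w * t‖ ^ 2 ≤
        (2 * κ) / (1 - r) ^ 2 := by
      apply div_le_div₀ (by positivity)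
      · rw [ht]
        have : 1 - R ^ 2 ≤ 2 * κ := by nlinarith
        have h3 : 0 ≤ 1 - R ^ 2 := by nlinarith
        nlinarith [sq_nonneg ‖w‖]
      · positivity
      · gcongr
    have h2 : (2 * κ) / (1 - r) ^ 2 = 1 - Real.exp (-ε) := by
      rw [hκ]; field_simp
    nlinarith [norm_nonneg (bf w t)]

lemma greenFnE_eq {z w : ℂ} (h : z ≠ w) :
    greenFnE z w = ENNReal.ofReal (-Real.log ‖bf w z‖) := by
  rw [greenFnE, if_neg h, bf, ← Real.log_inv, ← norm_inv, inv_div]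

/-! ### Removing zeros and the maximum principle -/

lemma exists_factor {U : Set ℂ} (hU : IsOpen U) {ι : Type*} [DecidableEq ι] (x : ι → ℂ)
    (S : Finset ι) :
    ∀ (_ : Set.InjOn x S) (_ : ∀ i ∈ S, x i ∈ U) (f : ℂ → ℂ)
    (_ : DifferentiableOn ℂ f U) (_ : ∀ i ∈ S, f (x i) = 0),
    ∃ q : ℂ → ℂ, DifferentiableOn ℂ q U ∧ ∀ z ∈ U, f z = (∏ i ∈ S, (z - x i)) * q z := by
  induction S using Finset.induction_on with
  | empty => intro _ _ f hf _; exact ⟨f, hf, by simp⟩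
  | insert a S ha ih =>
    intro hinj hx f hf h0
    have hfa : f (x a) = 0 := h0 a (Finset.mem_insert_self _ _)
    have hd : DifferentiableOn ℂ (dslope f (x a)) U :=
      (Complex.differentiableOn_dslope (hU.mem_nhds (hx a (Finset.mem_insert_self _ _)))).mpr hf
    have hfac : ∀ z, f z = (z - x a) * dslope f (x a) z := by
      intro z
      have := sub_smul_dslope f (x a) z
      rw [smul_eq_mul, hfa, sub_zero] at this
      exact this.symm
    obtain ⟨q, hq, hq'⟩ := ih (hinj.mono (by simp)) (fun i hi => hx i (Finset.mem_insert_of_mem hi))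
      (dslope f (x a)) hd (by
        intro i hi
        have hne : x i - x a ≠ 0 := by
          intro h
          have := hinj (Finset.mem_coe.mpr (Finset.mem_insert_of_mem hi))
            (Finset.mem_coe.mpr (Finset.mem_insert_self a S)) (sub_eq_zero.mp h)
          exact ha (this ▸ hi)
        have h1 := hfac (x i)
        rw [h0 i (Finset.mem_insert_of_mem hi)] at h1
        exact (mul_eq_zero.mp h1.symm).resolve_left hne)
    refine ⟨q, hq, fun z hz => ?_⟩
    rw [Finset.prod_insert ha, hfac z, hq' z hz, mul_assoc]

/-- Maximum principle for the quotient of `f` by a product of factors `(z - xᵢ) / eᵢ(z)` whose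
zeros are zeros of `f`. Taking `eᵢ = 1` gives polynomials, `eᵢ(z) = 1 - x̄ᵢ z` Blaschke
products. -/
lemma norm_le_of_zeros {U : Set ℂ} (hU : IsOpen U) {ι : Type*} [Fintype ι] [DecidableEq ι]
    {c : ℂ} {R : ℝ} (hR : 0 < R) (hcU : Metric.closedBall c R ⊆ U)
    {x : ι → ℂ} (hinj : Function.Injective x) (hx : ∀ i, x i ∈ Metric.ball c R)
    {e : ι → ℂ → ℂ} (he : ∀ i, DifferentiableOn ℂ (e i) U) (he0 : ∀ i, ∀ z ∈ U, e i z ≠ 0)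
    {f : ℂ → ℂ} (hf : DifferentiableOn ℂ f U) (h0 : ∀ i, f (x i) = 0) {M : ℝ}
    (hM : ∀ t ∈ Metric.sphere c R, ‖f t‖ ≤ M * ∏ i, ‖(t - x i) / e i t‖) :
    ∀ z ∈ Metric.closedBall c R, ‖f z‖ ≤ M * ∏ i, ‖(z - x i) / e i z‖ := by
  obtain ⟨q, hq, hfq⟩ := exists_factor hU x Finset.univ hinj.injOn
    (fun i _ => hcU (Metric.ball_subset_closedBall (hx i))) f hf (fun i _ => h0 i)
  set Q : ℂ → ℂ := fun z => (∏ i, e i z) * q z with hQ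
  have hQd : DifferentiableOn ℂ Q U := by
    apply DifferentiableOn.mul _ hq
    exact DifferentiableOn.fun_finsetProd fun i _ => he i
  have hfQ : ∀ z ∈ U, ‖f z‖ = ‖Q z‖ * ∏ i, ‖(z - x i) / e i z‖ := by
    intro z hz
    rw [← norm_prod, ← norm_mul, hfq z hz, hQ, Finset.prod_div_distrib]
    have : ∏ i, e i z ≠ 0 := Finset.prod_ne_zero_iff.mpr fun i _ => he0 i z hz
    congr 1
    field_simp
  have hQM : ∀ t ∈ frontier (Metric.ball c R), ‖Q t‖ ≤ M := by
    intro t ht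
    rw [frontier_ball c hR.ne'] at ht
    have htU := hcU (Metric.sphere_subset_closedBall ht)
    have h1 := hM t ht
    rw [hfQ t htU] at h1
    refine le_of_mul_le_mul_right h1 (Finset.prod_pos fun i _ => norm_pos_iff.mpr ?_)
    refine div_ne_zero (sub_ne_zero.mpr ?_) (he0 i t htU)
    rintro rfl
    have := hx i
    rw [Metric.mem_ball] at this
    rw [Metric.mem_sphere] at ht
    linarith
  intro z hz
  rw [hfQ z (hcU hz)]
  refine mul_le_mul_of_nonneg_right ?_ (Finset.prod_nonneg fun i _ => norm_nonneg _)
  refine Complex.norm_le_of_forall_mem_frontier_norm_le Metric.isBounded_ball ?_ hQM ?_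
  · exact (hQd.mono hcU).diffContOnCl_ball subset_rfl
  · rwa [closure_ball c hR.ne']

/-! ### A two-constants estimate near a continuum -/

lemma prod_dist_eq_factorial (j k : ℕ) :
    ∏ i ∈ (Finset.range (j + 1 + k)).erase j, |(j : ℝ) - i| = (j.factorial : ℝ) * k.factorial := by
  induction k with
  | zero =>
    have : (Finset.range (j + 1 + 0)).erase j = Finset.range j := by
      ext i; simp; omega
    rw [this, ← Finset.prod_range_reflect, ← Finset.prod_range_add_one_eq_factorial]
    push_cast
    rw [Nat.factorial_zero, Nat.cast_one, mul_one]
    refine Finset.prod_congr rfl fun i hi => ?_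
    have hi' : i < j := Finset.mem_range.mp hi
    have : ((j - 1 - i : ℕ) : ℝ) = (j : ℝ) - 1 - i := by
      rw [Nat.sub_sub, Nat.cast_sub (by omega)]; push_cast; ring
    rw [this, show (j : ℝ) - (j - 1 - i) = i + 1 by ring]
    exact abs_of_nonneg (by positivity)
  | succ k ih =>
    have : (Finset.range (j + 1 + (k + 1))).erase j =
        insert (j + 1 + k) ((Finset.range (j + 1 + k)).erase j) := by
      ext i; simp; omega
    rw [this, Finset.prod_insert (by simp), ih, Nat.factorial_succ]
    push_cast
    rw [show (j : ℝ) - (j + 1 + k) = -(k + 1) by ring, abs_neg, abs_of_nonneg (by positivity)]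
    ring

lemma prod_div_dist_le (N j : ℕ) (hj : j < N) :
    ∏ i ∈ (Finset.range N).erase j, (6 * (N : ℝ)) / |(j : ℝ) - i| ≤ Real.exp (12 * N) := by
  obtain ⟨k, rfl⟩ : ∃ k, N = j + 1 + k := ⟨N - (j + 1), by omega⟩
  set N := j + 1 + k with hN
  rw [Finset.prod_div_distrib, hN, prod_dist_eq_factorial, ← hN, Finset.prod_const,
    Finset.card_erase_of_mem (by simpa using hj), Finset.card_range,
    show N - 1 = j + k by omega, pow_add, mul_div_mul_comm]
  have h1 := Real.pow_div_factorial_le_exp (x := 6 * (N : ℝ)) (by positivity) j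
  have h2 := Real.pow_div_factorial_le_exp (x := 6 * (N : ℝ)) (by positivity) k
  rw [show 12 * (N : ℝ) = 6 * N + 6 * N by ring, Real.exp_add]
  gcongr

/-- Lagrange interpolation at `N` points of moduli `s/N, 2s/N, …, s` around `a`: a function bounded
by `M` on the disk of radius `5s` and by `m` at the nodes is bounded on the disk of radius `s` by
`m` times the Lebesgue constant plus a remainder that is geometrically smaller than `M`. -/
lemma norm_le_of_nodes {U : Set ℂ} (hU : IsOpen U) {a : ℂ} {s : ℝ} (hs : 0 < s)
    (haU : Metric.closedBall a (5 * s) ⊆ U) {f : ℂ → ℂ} (hf : DifferentiableOn ℂ f U)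
    {N : ℕ} (hN : 0 < N) {ζ : ℕ → ℂ} (hζ : ∀ j < N, ‖ζ j - a‖ = s * ((j + 1 : ℝ) / N))
    {m M : ℝ} (hm : ∀ j < N, ‖f (ζ j)‖ ≤ m) (hM : ∀ t ∈ Metric.closedBall a (5 * s), ‖f t‖ ≤ M) :
    ∀ z ∈ Metric.closedBall a s, ‖f z‖ ≤ 2 * m * Real.exp (13 * N) + M / 2 ^ N := by
  have hm0 : 0 ≤ m := (norm_nonneg _).trans (hm 0 hN)
  have hNr : (0 : ℝ) < N := by exact_mod_cast hN
  have hζs : ∀ j < N, ‖ζ j - a‖ ≤ s := by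
    intro j hj
    rw [hζ j hj]
    have : ((j : ℝ) + 1) / N ≤ 1 := by
      rw [div_le_one hNr]; exact_mod_cast hj
    nlinarith
  have hsep : ∀ j < N, ∀ i < N, s / N * |(j : ℝ) - i| ≤ ‖ζ j - ζ i‖ := by
    intro j hj i hi
    have h1 := abs_norm_sub_norm_le (ζ j - a) (ζ i - a)
    rw [sub_sub_sub_cancel_right, hζ j hj, hζ i hi] at h1
    have : s * ((j + 1 : ℝ) / N) - s * ((i + 1 : ℝ) / N) = s / N * ((j : ℝ) - i) := by
      field_simp; ring
    rwa [this, abs_mul, abs_of_pos (by positivity)] at h1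
  have hinj : ∀ j < N, ∀ i < N, j ≠ i → ζ j - ζ i ≠ 0 := by
    intro j hj i hi hne
    have h1 := hsep j hj i hi
    have h2 : (0 : ℝ) < |(j : ℝ) - i| := abs_pos.mpr (sub_ne_zero.mpr (by exact_mod_cast hne))
    exact norm_pos_iff.mp (lt_of_lt_of_le (by positivity) h1)
  set P : ℂ → ℂ := fun z => ∑ j ∈ Finset.range N, f (ζ j) *
    ∏ i ∈ (Finset.range N).erase j, (z - ζ i) / (ζ j - ζ i) with hP
  have hPd : Differentiable ℂ P := by
    rw [hP]
    refine Differentiable.fun_sum fun j _ => ?_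
    refine Differentiable.const_mul (Differentiable.fun_finsetProd fun i _ => ?_) _
    fun_prop
  have hPζ : ∀ j < N, P (ζ j) = f (ζ j) := by
    intro j hj
    rw [hP]
    simp only
    rw [Finset.sum_eq_single j]
    · rw [Finset.prod_eq_one, mul_one]
      intro i hi
      rw [Finset.mem_erase, Finset.mem_range] at hi
      exact div_self (hinj j hj i hi.2 hi.1.symm)
    · intro i hi hij
      rw [Finset.prod_eq_zero (i := j), mul_zero]
      · exact Finset.mem_erase.mpr ⟨hij.symm, Finset.mem_range.mpr hj⟩
      · simp
    · intro h; exact absurd (Finset.mem_range.mpr hj) h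
  have hPb : ∀ t ∈ Metric.closedBall a (5 * s), ‖P t‖ ≤ m * Real.exp (13 * N) := by
    intro t ht
    rw [mem_closedBall_iff_norm] at ht
    have hterm : ∀ j ∈ Finset.range N, ‖f (ζ j) *
        ∏ i ∈ (Finset.range N).erase j, (t - ζ i) / (ζ j - ζ i)‖ ≤ m * Real.exp (12 * N) := by
      intro j hj
      rw [Finset.mem_range] at hj
      rw [norm_mul, norm_prod]
      refine mul_le_mul (hm j hj) ?_ (Finset.prod_nonneg fun _ _ => norm_nonneg _) hm0
      refine le_trans (Finset.prod_le_prod (fun _ _ => norm_nonneg _) fun i hi => ?_)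
        (prod_div_dist_le N j hj)
      rw [Finset.mem_erase, Finset.mem_range] at hi
      have hji : (0 : ℝ) < |(j : ℝ) - i| :=
        abs_pos.mpr (sub_ne_zero.mpr (by exact_mod_cast hi.1.symm))
      have h6 : ‖t - ζ i‖ ≤ 6 * s := by
        have h7 := norm_sub_le (t - a) (ζ i - a)
        rw [sub_sub_sub_cancel_right] at h7
        linarith [hζs i hi.2]
      have h8 : 6 * (N : ℝ) / |(j : ℝ) - i| = 6 * s / (s / N * |(j : ℝ) - i|) := by
        field_simp
      rw [norm_div, h8]
      exact div_le_div₀ (by positivity) h6 (by positivity) (hsep j hj i hi.2)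
    refine (norm_sum_le_of_le _ hterm).trans ?_
    rw [Finset.sum_const, Finset.card_range, nsmul_eq_mul]
    have h9 : (N : ℝ) ≤ Real.exp N := by linarith [Real.add_one_le_exp (N : ℝ)]
    calc (N : ℝ) * (m * Real.exp (12 * N)) = m * (N * Real.exp (12 * N)) := by ring
      _ ≤ m * (Real.exp N * Real.exp (12 * N)) := by gcongr
      _ = m * Real.exp (13 * N) := by rw [← Real.exp_add]; congr 2; ring
  set m' := m * Real.exp (13 * N) with hm'
  have hm'0 : 0 ≤ m' := by positivity
  have hM0 : 0 ≤ M := (norm_nonneg _).trans (hM a (Metric.mem_closedBall_self (by positivity)))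
  have hkey := norm_le_of_zeros hU (ι := Fin N) (c := a) (R := 5 * s) (by positivity) haU
    (x := fun j => ζ j)
    (by
      intro j i hji
      by_contra hne
      exact hinj j j.2 i i.2 (fun h => hne (Fin.ext h)) (sub_eq_zero.mpr hji))
    (by
      intro j
      rw [mem_ball_iff_norm]
      linarith [hζs j j.2])
    (e := fun _ _ => 1) (fun _ => differentiableOn_const _) (fun _ _ _ => one_ne_zero)
    (f := fun z => f z - P z) (hf.sub hPd.differentiableOn)
    (fun j => by simp [hPζ j j.2])
    (M := (M + m') / (4 * s) ^ N)
    (by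
      intro t ht
      have ht' := Metric.sphere_subset_closedBall ht
      refine (norm_sub_le _ _).trans ((add_le_add (hM t ht') (hPb t ht')).trans ?_)
      rw [div_mul_eq_mul_div, le_div_iff₀ (by positivity)]
      refine mul_le_mul_of_nonneg_left ?_ (by positivity)
      have hprod : ∏ _i : Fin N, (4 * s) = (4 * s) ^ N := by simp
      rw [← hprod]
      refine Finset.prod_le_prod (fun _ _ => by positivity) fun i _ => ?_
      rw [div_one]
      rw [mem_sphere_iff_norm] at ht
      have h7 := norm_sub_norm_le (t - a) (ζ i - a)
      rw [sub_sub_sub_cancel_right] at h7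
      linarith [hζs i i.2])
  intro z hz
  have hz5 : z ∈ Metric.closedBall a (5 * s) :=
    Metric.closedBall_subset_closedBall (by linarith) hz
  have h1 := hkey z hz5
  have h2 : ∏ i : Fin N, ‖(z - ζ i) / 1‖ ≤ (2 * s) ^ N := by
    calc ∏ i : Fin N, ‖(z - ζ i) / 1‖ ≤ ∏ i : Fin N, (2 * s) := by
          refine Finset.prod_le_prod (fun _ _ => norm_nonneg _) fun i _ => ?_
          rw [div_one]
          rw [mem_closedBall_iff_norm] at hz
          have h7 := norm_sub_le (z - a) (ζ i - a)
          rw [sub_sub_sub_cancel_right] at h7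
          linarith [hζs i i.2]
      _ = (2 * s) ^ N := by simp
  have h3 : ‖f z - P z‖ ≤ (M + m') / 2 ^ N := by
    refine h1.trans ((mul_le_mul_of_nonneg_left h2 (by positivity)).trans (le_of_eq ?_))
    rw [show 4 * s = 2 * (2 * s) by ring, mul_pow]
    field_simp
  have h4 : m' / 2 ^ N ≤ m' := div_le_self hm'0 (one_le_pow₀ (by norm_num))
  have h5 : ‖f z‖ ≤ ‖f z - P z‖ + ‖P z‖ := by
    have := norm_add_le (f z - P z) (P z)
    rwa [sub_add_cancel] at this
  rw [add_div] at h3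
  have h6 := hPb z hz5
  have : 2 * m * Real.exp (13 * N) = m' + m' := by rw [hm']; ring
  rw [this]
  linarith

/-- If `‖f‖ ≤ 1` near `a` and `‖f‖ ≤ e^{-A}` on a set meeting every small circle around `a`, then
`‖f‖` is almost `e^{-A}` on a small disk around `a`, with constants independent of `f` and `a`:
each passage from a disk to the concentric disk with radius five times smaller reduces the loss in
the exponent by the factor `51/52`. -/
lemma exists_two_constants (k : ℕ) : ∃ C : ℝ, 1 ≤ C ∧ ∀ (U : Set ℂ) (_ : IsOpen U) (a : ℂ) (s : ℝ)
    (_ : 0 < s) (_ : Metric.closedBall a s ⊆ U) (K : Set ℂ)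
    (_ : ∀ t, 0 < t → t ≤ s → ∃ ζ ∈ K, ‖ζ - a‖ = t) (f : ℂ → ℂ) (_ : DifferentiableOn ℂ f U)
    (A : ℝ) (_ : 0 ≤ A) (_ : ∀ z ∈ Metric.closedBall a s, ‖f z‖ ≤ 1)
    (_ : ∀ z ∈ K, ‖f z‖ ≤ Real.exp (-A)),
    ∀ z ∈ Metric.closedBall a (s / 5 ^ k),
      ‖f z‖ ≤ C * Real.exp (-((1 - (51 / 52 : ℝ) ^ k) * A)) := by
  induction k with
  | zero =>
    refine ⟨1, le_rfl, fun U _ a s _ _ K _ f _ A _ h1 _ z hz => ?_⟩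
    simpa using h1 z (by simpa using hz)
  | succ k ih =>
    obtain ⟨C, hC, ih⟩ := ih
    refine ⟨2 * Real.exp 13 + C, by linarith [Real.exp_pos 13], ?_⟩
    intro U hU a s hs haU K hK f hf A hA h1 hfK
    have ih' := ih U hU a s hs haU K hK f hf A hA h1 hfK
    set β : ℝ := (51 / 52 : ℝ) ^ k with hβ
    have hβ0 : 0 ≤ β := by positivity
    have hβ1 : β ≤ 1 := pow_le_one₀ (by norm_num) (by norm_num)
    have hβA : 0 ≤ β * A := by positivity
    -- the number of nodes balances the Lebesgue constant against the remainder
    set N : ℕ := ⌊β * A / 26⌋₊ + 1 with hN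
    have hN0 : 0 < N := Nat.succ_pos _
    have hNr : (0 : ℝ) < N := by exact_mod_cast hN0
    have hNle : (N : ℝ) ≤ β * A / 26 + 1 := by
      rw [hN]; push_cast
      linarith [Nat.floor_le (show 0 ≤ β * A / 26 by positivity)]
    have hNge : β * A / 26 ≤ N := by
      rw [hN]; push_cast
      exact (Nat.lt_floor_add_one _).le
    set s' := s / 5 ^ (k + 1) with hs'
    have h5 : 5 * s' = s / 5 ^ k := by rw [hs', pow_succ]; field_simp
    have hs'0 : 0 < s' := by positivity
    have hs's : s' ≤ s := div_le_self hs.le (one_le_pow₀ (by norm_num))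
    have hsub : Metric.closedBall a (5 * s') ⊆ U := by
      refine (Metric.closedBall_subset_closedBall ?_).trans haU
      rw [h5]
      exact div_le_self hs.le (one_le_pow₀ (by norm_num))
    have hex : ∀ j : ℕ, ∃ ζ : ℂ, j < N → ζ ∈ K ∧ ‖ζ - a‖ = s' * ((j + 1 : ℝ) / N) := by
      intro j
      by_cases hj : j < N
      · have hj1 : ((j : ℝ) + 1) / N ≤ 1 := by
          rw [div_le_one hNr]; exact_mod_cast hj
        obtain ⟨ζ, h⟩ := hK (s' * ((j + 1 : ℝ) / N)) (by positivity) (by nlinarith)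
        exact ⟨ζ, fun _ => h⟩
      · exact ⟨0, fun h => absurd h hj⟩
    choose ζ hζ using hex
    have key := norm_le_of_nodes hU hs'0 hsub hf hN0 (ζ := ζ) (fun j hj => (hζ j hj).2)
      (m := Real.exp (-A)) (M := C * Real.exp (-((1 - β) * A)))
      (fun j hj => hfK _ (hζ j hj).1) (fun t ht => ih' t (by rwa [← h5]))
    intro z hz
    refine (key z hz).trans ?_
    have e1 : Real.exp (-A) * Real.exp (13 * N) ≤
        Real.exp 13 * Real.exp (-((1 - (51 / 52 : ℝ) ^ (k + 1)) * A)) := by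
      rw [← Real.exp_add, ← Real.exp_add, Real.exp_le_exp, pow_succ, ← hβ]
      nlinarith
    have e2 : C * Real.exp (-((1 - β) * A)) / 2 ^ N ≤
        C * Real.exp (-((1 - (51 / 52 : ℝ) ^ (k + 1)) * A)) := by
      have e3 : Real.exp ((N : ℝ) / 2) ≤ 2 ^ N := by
        have e4 : Real.exp (1 / 2) ≤ 2 := by
          have : Real.exp (1 / 2) ≤ Real.exp (Real.log 2) :=
            Real.exp_le_exp.mpr (by linarith [Real.log_two_gt_d9])
          rwa [Real.exp_log (by norm_num)] at this
        calc Real.exp ((N : ℝ) / 2) = Real.exp (1 / 2) ^ N := by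
              rw [← Real.exp_nat_mul]; congr 1; ring
          _ ≤ 2 ^ N := by gcongr
      rw [div_le_iff₀ (by positivity), mul_assoc]
      refine mul_le_mul_of_nonneg_left ?_ (by linarith)
      refine le_trans ?_ (mul_le_mul_of_nonneg_left e3 (Real.exp_pos _).le)
      rw [← Real.exp_add, Real.exp_le_exp, pow_succ, ← hβ]
      nlinarith
    linarith

/-! ### Discrete energies of point configurations -/

/-- The product of the pseudo-hyperbolic distances over all ordered pairs of distinct indices. -/
def pprod {N : ℕ} (x : Fin N → ℂ) : ℝ := ∏ i, ∏ k, if i = k then 1 else ‖bf (x i) (x k)‖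

lemma pprod_nonneg {N : ℕ} (x : Fin N → ℂ) : 0 ≤ pprod x :=
  Finset.prod_nonneg fun _ _ => Finset.prod_nonneg fun _ _ => by split_ifs <;> positivity

lemma pprod_eq_prod {N : ℕ} (x : Fin (N + 1) → ℂ) :
    pprod x = ∏ j, ∏ i, ‖bf (x (j.succAbove i)) (x j)‖ := by
  refine Finset.prod_congr rfl fun j _ => ?_
  rw [Fin.prod_univ_succAbove _ j, if_pos rfl, one_mul]
  refine Finset.prod_congr rfl fun i _ => ?_
  rw [if_neg (Fin.succAbove_ne j i).symm, norm_bf_symm]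

lemma pprod_succAbove {N : ℕ} (x : Fin (N + 1) → ℂ) (j : Fin (N + 1)) :
    pprod x = (∏ i, ‖bf (x (j.succAbove i)) (x j)‖) ^ 2 * pprod (fun i => x (j.succAbove i)) := by
  have hrow : ∀ i : Fin N, (∏ k, if j.succAbove i = k then 1 else ‖bf (x (j.succAbove i)) (x k)‖) =
      ‖bf (x (j.succAbove i)) (x j)‖ *
        ∏ k, if i = k then 1 else ‖bf (x (j.succAbove i)) (x (j.succAbove k))‖ := by
    intro i
    rw [Fin.prod_univ_succAbove _ j, if_neg (Fin.succAbove_ne j i)]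
    congr 1
    refine Finset.prod_congr rfl fun k _ => ?_
    simp
  have hj : (∏ k, if j = k then 1 else ‖bf (x j) (x k)‖) =
      ∏ i, ‖bf (x (j.succAbove i)) (x j)‖ := by
    rw [Fin.prod_univ_succAbove _ j, if_pos rfl, one_mul]
    refine Finset.prod_congr rfl fun i _ => ?_
    rw [if_neg (Fin.succAbove_ne j i).symm, norm_bf_symm]
  rw [pprod, Fin.prod_univ_succAbove _ j, hj, Finset.prod_congr rfl fun i _ => hrow i,
    Finset.prod_mul_distrib, pprod]
  ring

lemma injective_of_pprod_pos {N : ℕ} {x : Fin N → ℂ} (h : 0 < pprod x) :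
    Function.Injective x := by
  intro i k hik
  by_contra hne
  apply h.ne'
  refine Finset.prod_eq_zero (Finset.mem_univ i) (Finset.prod_eq_zero (Finset.mem_univ k) ?_)
  rw [if_neg hne, hik, bf_self, norm_zero]

lemma pprod_pos_of_injective {N : ℕ} {x : Fin N → ℂ} (h : Function.Injective x)
    (hx : ∀ i, ‖x i‖ < 1) : 0 < pprod x := by
  refine Finset.prod_pos fun i _ => Finset.prod_pos fun k _ => ?_
  split_ifs with hik
  · exact one_pos
  · exact norm_pos_iff.mpr (bf_ne_zero (hx i) (hx k).le fun h' => hik (h h').symm)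

lemma pprod_le_one {N : ℕ} {x : Fin N → ℂ} (hx : ∀ i, ‖x i‖ < 1) : pprod x ≤ 1 := by
  refine Finset.prod_le_one (fun i _ => Finset.prod_nonneg fun k _ => by split_ifs <;> positivity)
    fun i _ => Finset.prod_le_one (fun k _ => by split_ifs <;> positivity) fun k _ => ?_
  split_ifs
  · exact le_rfl
  · exact norm_bf_le_one (hx i) (hx k).le

lemma sum_greenFnE_eq {N : ℕ} {x : Fin N → ℂ} (h : Function.Injective x)
    (hx : ∀ i, ‖x i‖ < 1) :
    (∑ i, ∑ k, if i = k then 0 else greenFnE (x i) (x k)) =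
      ENNReal.ofReal (-Real.log (pprod x)) := by
  have hpos : ∀ i k, (if i = k then 1 else ‖bf (x i) (x k)‖) ≠ 0 := by
    intro i k
    split_ifs with hik
    · exact one_ne_zero
    · exact norm_ne_zero_iff.mpr (bf_ne_zero (hx i) (hx k).le fun h' => hik (h h').symm)
  have hnn : ∀ i k, 0 ≤ -Real.log (if i = k then 1 else ‖bf (x i) (x k)‖) := by
    intro i k
    rw [neg_nonneg]
    apply Real.log_nonpos
    · split_ifs <;> positivity
    · split_ifs
      · exact le_rfl
      · exact norm_bf_le_one (hx i) (hx k).le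
  rw [pprod, Real.log_prod fun i _ => Finset.prod_ne_zero_iff.mpr fun k _ => hpos i k]
  simp_rw [Real.log_prod fun k (_ : k ∈ Finset.univ) => hpos _ k]
  simp_rw [← Finset.sum_neg_distrib]
  rw [ENNReal.ofReal_sum_of_nonneg fun i _ => Finset.sum_nonneg fun k _ => hnn i k]
  refine Finset.sum_congr rfl fun i _ => ?_
  rw [ENNReal.ofReal_sum_of_nonneg fun k _ => hnn i k]
  refine Finset.sum_congr rfl fun k _ => ?_
  split_ifs with hik
  · simp
  · rw [greenFnE_eq fun h' => hik (h h'), norm_bf_symm]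

lemma exists_max_pprod {K : Set ℂ} (hK : IsCompact K) (hne : K.Nonempty) (hKD : K ⊆ unitDisk)
    (N : ℕ) : ∃ x : Fin N → ℂ, (∀ i, x i ∈ K) ∧ ∀ y : Fin N → ℂ, (∀ i, y i ∈ K) →
      pprod y ≤ pprod x := by
  have hc : IsCompact (Set.univ.pi fun _ : Fin N => K) := isCompact_univ_pi fun _ => hK
  have hcont : ContinuousOn (pprod (N := N)) (Set.univ.pi fun _ : Fin N => K) := by
    unfold pprod
    refine continuousOn_finsetProd _ fun i _ => continuousOn_finsetProd _ fun k _ => ?_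
    split_ifs
    · exact continuousOn_const
    · refine ContinuousOn.norm (ContinuousOn.div ?_ ?_ ?_)
      · fun_prop
      · refine Continuous.continuousOn ?_
        have : Continuous fun y : Fin N → ℂ => (starRingEnd ℂ) (y i) :=
          Complex.continuous_conj.comp (continuous_apply i)
        fun_prop
      · intro y hy
        exact one_sub_conj_mul_ne (hKD (hy i trivial)) (le_of_lt (hKD (hy k trivial)))
  obtain ⟨p, hp⟩ := hne
  obtain ⟨x, hx, hmax⟩ := hc.exists_isMaxOn ⟨fun _ => p, fun _ _ => hp⟩ hcont
  exact ⟨x, fun i => hx i trivial, fun y hy => hmax fun i _ => hy i⟩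

lemma measurable_greenFnE : Measurable (Function.uncurry greenFnE) := by
  unfold Function.uncurry greenFnE
  refine Measurable.ite (measurableSet_eq_fun measurable_fst measurable_snd) measurable_const ?_
  have : Measurable fun a : ℂ × ℂ => (starRingEnd ℂ) a.2 :=
    Complex.continuous_conj.measurable.comp measurable_snd
  fun_prop

/-- Averaging the discrete energy over independent points with law `μ`. -/
lemma exists_config_of_energy {K : Set ℂ} (hKD : K ⊆ unitDisk) {μ : Measure ℂ}
    [IsProbabilityMeasure μ] (hμ : μ Kᶜ = 0) (hfin : greenEnergy μ ≠ ⊤) (N : ℕ) :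
    ∃ y : Fin N → ℂ, (∀ i, y i ∈ K) ∧ 0 < pprod y ∧
      -Real.log (pprod y) ≤ (N : ℝ) ^ 2 * (greenEnergy μ).toReal := by
  set S : (Fin N → ℂ) → ℝ≥0∞ := fun y => ∑ i, ∑ k, if i = k then 0 else greenFnE (y i) (y k)
    with hS
  have hp : ∀ i k : Fin N, Measurable fun y : Fin N → ℂ => (y i, y k) := by
    intro i k
    fun_prop
  have hg : Measurable fun p : ℂ × ℂ => greenFnE p.1 p.2 := measurable_greenFnE
  have hmeas : ∀ i k : Fin N, Measurable fun y : Fin N → ℂ =>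
      if i = k then 0 else greenFnE (y i) (y k) := by
    intro i k
    split_ifs
    · exact measurable_const
    · exact hg.comp (hp i k)
  have hSm : Measurable S :=
    Finset.measurable_sum _ fun i _ => Finset.measurable_sum _ fun k _ => hmeas i k
  set P : Measure (Fin N → ℂ) := Measure.pi fun _ => μ with hP
  have hpair : ∀ i k : Fin N, i ≠ k →
      ∫⁻ y, greenFnE (y i) (y k) ∂P = greenEnergy μ := by
    intro i k hik
    have hind : ProbabilityTheory.IndepFun (fun y : Fin N → ℂ => y i) (fun y => y k) P :=
      (ProbabilityTheory.iIndepFun_pi (μ := fun _ : Fin N => μ) (X := fun _ z => z)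
        fun _ => aemeasurable_id).indepFun hik
    have hmap : P.map (fun y => (y i, y k)) = μ.prod μ := by
      rw [hind.map_prod_eq_prod_map_map (measurable_pi_apply i).aemeasurable
        (measurable_pi_apply k).aemeasurable]
      have h1 : ∀ l : Fin N, P.map (fun y => y l) = μ :=
        fun l => (measurePreserving_eval (fun _ : Fin N => μ) l).map_eq
      rw [h1, h1]
    rw [greenEnergy, ← lintegral_prod (fun p : ℂ × ℂ => greenFnE p.1 p.2)
      hg.aemeasurable, ← hmap, lintegral_map hg (hp i k)]
  have hint : ∫⁻ y, S y ∂P ≤ (N : ℝ≥0∞) ^ 2 * greenEnergy μ := by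
    rw [hS, lintegral_finsetSum _ fun i _ => Finset.measurable_sum _ fun k _ => hmeas i k]
    simp_rw [lintegral_finsetSum _ fun k (_ : k ∈ Finset.univ) => hmeas _ k]
    have : ∀ i ∈ (Finset.univ : Finset (Fin N)), (∑ k, ∫⁻ y, (if i = k then 0 else
        greenFnE (y i) (y k)) ∂P) ≤ N * greenEnergy μ := by
      intro i _
      refine (Finset.sum_le_card_nsmul _ _ (greenEnergy μ) fun k _ => ?_).trans (le_of_eq (by simp))
      split_ifs with hik
      · simp
      · exact (hpair i k hik).le
    refine (Finset.sum_le_card_nsmul _ _ _ this).trans (le_of_eq ?_)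
    simp [sq, mul_assoc]
  have hnull : P {y | ¬ ∀ i, y i ∈ K} = 0 := by
    have h1 : ∀ i : Fin N, ∀ᵐ y ∂P, y i ∈ K := fun i =>
      (measurePreserving_eval (fun _ : Fin N => μ) i).quasiMeasurePreserving.ae
        (by rw [ae_iff]; exact hμ)
    exact ae_all_iff.mpr h1
  obtain ⟨y, hyN, hy⟩ := exists_notMem_null_le_lintegral hSm.aemeasurable hnull
  have hyK : ∀ i, y i ∈ K := not_not.mp hyN
  have hyD : ∀ i, ‖y i‖ < 1 := fun i => hKD (hyK i)
  have hlt : S y < ⊤ := by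
    refine (hy.trans hint).trans_lt ?_
    exact ENNReal.mul_lt_top (ENNReal.pow_lt_top (ENNReal.natCast_lt_top N)) hfin.lt_top
  have hinj : Function.Injective y := by
    intro i k hik
    by_contra hne
    refine hlt.ne ?_
    refine ENNReal.sum_eq_top.mpr ⟨i, Finset.mem_univ _, ENNReal.sum_eq_top.mpr
      ⟨k, Finset.mem_univ _, ?_⟩⟩
    rw [if_neg hne, greenFnE, if_pos hik]
  refine ⟨y, hyK, pprod_pos_of_injective hinj hyD, ?_⟩
  have h2 := hy.trans hint
  rw [hS] at h2
  simp only at h2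
  rw [sum_greenFnE_eq hinj hyD, ← ENNReal.ofReal_toReal hfin, ← ENNReal.ofReal_natCast,
    ← ENNReal.ofReal_pow (by positivity), ← ENNReal.ofReal_mul (by positivity)] at h2
  exact (ENNReal.ofReal_le_ofReal_iff (by positivity)).mp h2

/-! ### Spreading point masses over circles -/

/-- Normalized arc length on the circle with centre `c` and radius `s`. -/
def circ (s : ℝ) (c : ℂ) : Measure ℂ :=
  (ENNReal.ofReal (2 * Real.pi))⁻¹ •
    (volume.restrict (Set.Ioc 0 (2 * Real.pi))).map (circleMap c s)

instance (s : ℝ) (c : ℂ) : IsProbabilityMeasure (circ s c) := by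
  constructor
  rw [circ, Measure.smul_apply, Measure.map_apply (continuous_circleMap c s).measurable
    MeasurableSet.univ]
  simp only [preimage_univ, Measure.restrict_apply MeasurableSet.univ, univ_inter, Real.volume_Ioc,
    sub_zero, smul_eq_mul]
  exact ENNReal.inv_mul_cancel (by simp [Real.pi_pos]) ENNReal.ofReal_ne_top

lemma circ_compl {s : ℝ} (hs : 0 ≤ s) {c : ℂ} {B : Set ℂ} (hB : Metric.closedBall c s ⊆ B) :
    circ s c Bᶜ = 0 := by
  refine measure_mono_null (Set.compl_subset_compl.mpr hB) ?_
  rw [circ, Measure.smul_apply, Measure.map_apply (continuous_circleMap c s).measurable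
    Metric.isClosed_closedBall.measurableSet.compl]
  have : circleMap c s ⁻¹' (Metric.closedBall c s)ᶜ = ∅ := by
    ext θ; simpa using circleMap_mem_closedBall c hs θ
  rw [this]; simp

/-- The circle average of the Green function, by the mean value property of
`log |1 - w̄ z|` and Jensen's formula for `log |z - w|`. -/
lemma lintegral_circ_le {s : ℝ} (hs : 0 < s) {c w : ℂ} (hc : Metric.closedBall c s ⊆ unitDisk)
    (hw : ‖w‖ < 1) :
    ∫⁻ z, greenFnE w z ∂(circ s c) ≤ ENNReal.ofReal
      (Real.log ‖1 - (starRingEnd ℂ) w * c‖ - (Real.log s + Real.posLog (s⁻¹ * ‖c - w‖))) := by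
  set F : ℂ → ℝ := fun z => Real.log ‖1 - (starRingEnd ℂ) w * z‖ with hF
  set L : ℂ → ℝ := fun z => Real.log ‖z - w‖ with hL
  have hFharm : InnerProductSpace.HarmonicOnNhd F (Metric.closedBall c |s|) := by
    intro z hz
    rw [abs_of_pos hs] at hz
    exact AnalyticAt.harmonicAt_log_norm (f := fun z => 1 - (starRingEnd ℂ) w * z) (by fun_prop)
      (one_sub_conj_mul_ne hw (le_of_lt (hc hz)))
  have hFavg : Real.circleAverage F c s = F c :=
    InnerProductSpace.HarmonicOnNhd.circleAverage_eq hFharm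
  have hLavg : Real.circleAverage L c s = Real.log s + Real.posLog (s⁻¹ * ‖c - w‖) :=
    circleAverage_log_norm_sub_const_eq_log_radius_add_posLog hs.ne'
  have hFint : CircleIntegrable F c s :=
    MeromorphicOn.circleIntegrable_log_norm (f := fun z => 1 - (starRingEnd ℂ) w * z)
      (fun z _ => by fun_prop)
  have hLint : CircleIntegrable L c s := circleIntegrable_log_norm_sub_const s
  have havg : Real.circleAverage (F - L) c s = F c - (Real.log s + Real.posLog (s⁻¹ * ‖c - w‖)) := by
    rw [Real.circleAverage_sub hFint hLint, hFavg, hLavg]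
  have hpi : (0 : ℝ) < 2 * Real.pi := by positivity
  have hint : IntegrableOn (fun θ => (F - L) (circleMap c s θ)) (Set.Ioc 0 (2 * Real.pi)) :=
    (intervalIntegrable_iff_integrableOn_Ioc_of_le hpi.le).mp (hFint.sub hLint)
  have hmem : ∀ θ, ‖circleMap c s θ‖ < 1 := fun θ => hc (circleMap_mem_closedBall c hs.le θ)
  have hae : ∀ᵐ θ ∂(volume.restrict (Set.Ioc 0 (2 * Real.pi))), circleMap c s θ ≠ w := by
    refine ae_restrict_of_ae ?_
    rw [ae_iff]
    have h0 := ((countable_singleton w).preimage_circleMap c hs.ne').measure_zero volume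
    simp only [not_not, ne_eq]
    exact h0
  have hval : ∀ θ, circleMap c s θ ≠ w →
      (F - L) (circleMap c s θ) = -Real.log ‖bf w (circleMap c s θ)‖ := by
    intro θ hθ
    rw [bf, norm_div, Real.log_div (norm_ne_zero_iff.mpr (sub_ne_zero.mpr hθ))
      (norm_ne_zero_iff.mpr (one_sub_conj_mul_ne hw (hmem θ).le))]
    simp [hF, hL]
  have hnn : ∀ θ, 0 ≤ -Real.log ‖bf w (circleMap c s θ)‖ := fun θ =>
    neg_nonneg.mpr (Real.log_nonpos (norm_nonneg _) (norm_bf_le_one hw (hmem θ).le))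
  have hmw : Measurable fun z => greenFnE w z :=
    measurable_greenFnE.comp (measurable_const.prodMk measurable_id)
  rw [circ, lintegral_smul_measure, lintegral_map hmw (continuous_circleMap c s).measurable]
  have h1 : ∫⁻ θ in Set.Ioc 0 (2 * Real.pi), greenFnE w (circleMap c s θ) =
      ∫⁻ θ in Set.Ioc 0 (2 * Real.pi), ENNReal.ofReal ((F - L) (circleMap c s θ)) := by
    refine lintegral_congr_ae ?_
    filter_upwards [hae] with θ hθ
    rw [greenFnE_eq hθ.symm, hval θ hθ, norm_bf_symm]
  have h2 : 0 ≤ᵐ[volume.restrict (Set.Ioc 0 (2 * Real.pi))]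
      fun θ => (F - L) (circleMap c s θ) := by
    filter_upwards [hae] with θ hθ
    rw [hval θ hθ]; exact hnn θ
  rw [h1, ← ofReal_integral_eq_lintegral_ofReal hint h2, smul_eq_mul,
    ← ENNReal.ofReal_inv_of_pos hpi, ← ENNReal.ofReal_mul (by positivity)]
  refine ENNReal.ofReal_le_ofReal (le_of_eq ?_)
  change _ = F c - _
  rw [← havg, Real.circleAverage_def, intervalIntegral.integral_of_le hpi.le, smul_eq_mul]

lemma lintegral_circ_le_green {s : ℝ} (hs : 0 < s) {c w : ℂ}
    (hc : Metric.closedBall c s ⊆ unitDisk) (hw : ‖w‖ < 1) :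
    ∫⁻ z, greenFnE w z ∂(circ s c) ≤ greenFnE w c := by
  by_cases h : w = c
  · rw [greenFnE, if_pos h]; exact le_top
  have hc1 : ‖c‖ < 1 := hc (Metric.mem_closedBall_self hs.le)
  refine (lintegral_circ_le hs hc hw).trans ?_
  rw [greenFnE_eq h, norm_bf_symm]
  have hcw : 0 < ‖c - w‖ := norm_pos_iff.mpr (sub_ne_zero.mpr (Ne.symm h))
  refine ENNReal.ofReal_le_ofReal ?_
  rw [bf, norm_div, Real.log_div hcw.ne' (norm_ne_zero_iff.mpr (one_sub_conj_mul_ne hw hc1.le))]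
  have h1 : Real.log (s⁻¹ * ‖c - w‖) ≤ Real.posLog (s⁻¹ * ‖c - w‖) := le_max_right _ _
  rw [Real.log_mul (by positivity) hcw.ne', Real.log_inv] at h1
  linarith

lemma lintegral_circ_le_const {s : ℝ} (hs : 0 < s) {c w : ℂ}
    (hc : Metric.closedBall c s ⊆ unitDisk) (hw : ‖w‖ < 1) :
    ∫⁻ z, greenFnE w z ∂(circ s c) ≤ ENNReal.ofReal (Real.log (2 / s)) := by
  have hc1 : ‖c‖ < 1 := hc (Metric.mem_closedBall_self hs.le)
  refine (lintegral_circ_le hs hc hw).trans (ENNReal.ofReal_le_ofReal ?_)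
  rw [Real.log_div two_ne_zero hs.ne']
  have h1 : 0 ≤ Real.posLog (s⁻¹ * ‖c - w‖) := Real.posLog_nonneg
  have h2 : Real.log ‖1 - (starRingEnd ℂ) w * c‖ ≤ Real.log 2 := by
    refine Real.log_le_log (norm_pos_iff.mpr (one_sub_conj_mul_ne hw hc1.le)) ?_
    refine (norm_sub_le _ _).trans ?_
    rw [norm_one, norm_mul, Complex.norm_conj]
    nlinarith [norm_nonneg w, norm_nonneg c]
  linarith

/-- Spreading `N` equal point masses over circles of a fixed radius `s` gives a measure of finite
energy, and by superharmonicity of the Green function this costs only a term `O(1/N)`. -/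
lemma greenV_le_of_config {G : Set ℂ} (hGD : G ⊆ unitDisk) {s : ℝ} (hs : 0 < s) {N : ℕ}
    (hN : 0 < N) {x : Fin N → ℂ} (hx : ∀ i, Metric.closedBall (x i) s ⊆ G)
    (hpos : 0 < pprod x) :
    greenV G ≤ ENNReal.ofReal ((-Real.log (pprod x) + N * Real.log (2 / s)) / (N : ℝ) ^ 2) := by
  have hinj := injective_of_pprod_pos hpos
  have hxD : ∀ i, Metric.closedBall (x i) s ⊆ unitDisk := fun i => (hx i).trans hGD
  have hx1 : ∀ i, ‖x i‖ < 1 := fun i => hxD i (Metric.mem_closedBall_self hs.le)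
  have hNr : (0 : ℝ) < N := by exact_mod_cast hN
  set σ : Measure ℂ := (N : ℝ≥0∞)⁻¹ • ∑ i, circ s (x i) with hσ
  have hσp : IsProbabilityMeasure σ := by
    constructor
    simp only [hσ, Measure.smul_apply, Measure.finsetSum_apply, measure_univ, smul_eq_mul,
      Finset.sum_const, Finset.card_univ, Fintype.card_fin, nsmul_eq_mul, mul_one]
    exact ENNReal.inv_mul_cancel (by simpa using hN.ne') (ENNReal.natCast_ne_top N)
  have hσK : ∃ K : Set ℂ, K ⊆ G ∧ IsCompact K ∧ σ Kᶜ = 0 := by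
    refine ⟨⋃ i, Metric.closedBall (x i) s, iUnion_subset hx,
      isCompact_iUnion fun i => isCompact_closedBall _ _, ?_⟩
    simp only [hσ, Measure.smul_apply, Measure.finsetSum_apply, smul_eq_mul]
    rw [Finset.sum_eq_zero, mul_zero]
    exact fun i _ => circ_compl hs.le (subset_iUnion (fun i => Metric.closedBall (x i) s) i)
  have hE : greenV G ≤ greenEnergy σ := iInf_le_of_le σ (iInf_le_of_le hσp (iInf_le _ hσK))
  refine hE.trans ?_
  set c0 := Real.log (2 / s)
  have hcc : ∀ i k, ∫⁻ z, ∫⁻ w, greenFnE z w ∂(circ s (x k)) ∂(circ s (x i)) ≤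
      (if i = k then 0 else greenFnE (x i) (x k)) + if i = k then ENNReal.ofReal c0 else 0 := by
    intro i k
    have hae : ∀ᵐ z ∂(circ s (x i)), ‖z‖ < 1 := by
      rw [ae_iff]; exact circ_compl hs.le (hxD i)
    by_cases hik : i = k
    · rw [if_pos hik, if_pos hik, zero_add]
      calc _ ≤ ∫⁻ z, ENNReal.ofReal c0 ∂(circ s (x i)) := by
            refine lintegral_mono_ae ?_
            filter_upwards [hae] with z hz
            exact lintegral_circ_le_const hs (hxD k) hz
        _ = ENNReal.ofReal c0 := by simp
    · rw [if_neg hik, if_neg hik, add_zero]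
      have hsymm : ∀ z w, greenFnE z w = greenFnE w z := by
        intro z w
        by_cases h : z = w
        · rw [h]
        · rw [greenFnE_eq h, greenFnE_eq (Ne.symm h), norm_bf_symm]
      calc _ ≤ ∫⁻ z, greenFnE z (x k) ∂(circ s (x i)) := by
            refine lintegral_mono_ae ?_
            filter_upwards [hae] with z hz
            exact lintegral_circ_le_green hs (hxD k) hz
        _ = ∫⁻ z, greenFnE (x k) z ∂(circ s (x i)) := by simp_rw [hsymm _ (x k)]
        _ ≤ greenFnE (x k) (x i) := lintegral_circ_le_green hs (hxD i) (hx1 k)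
        _ = greenFnE (x i) (x k) := hsymm _ _
  have hen : greenEnergy σ = (N : ℝ≥0∞)⁻¹ * ((N : ℝ≥0∞)⁻¹ *
      ∑ i, ∑ k, ∫⁻ z, ∫⁻ w, greenFnE z w ∂(circ s (x k)) ∂(circ s (x i))) := by
    rw [greenEnergy, hσ]
    simp_rw [lintegral_smul_measure, lintegral_finsetSum_measure, smul_eq_mul]
    have hm : ∀ k : Fin N, Measurable fun z => ∫⁻ w, greenFnE z w ∂(circ s (x k)) := fun k =>
      measurable_greenFnE.lintegral_prod_right'
    congr 1
    rw [Finset.mul_sum]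
    refine Finset.sum_congr rfl fun i _ => ?_
    rw [lintegral_const_mul _ (Finset.measurable_sum _ fun k _ => hm k),
      lintegral_finsetSum _ fun k _ => hm k]
  have hsum : ∑ i, ∑ k, ∫⁻ z, ∫⁻ w, greenFnE z w ∂(circ s (x k)) ∂(circ s (x i)) ≤
      ENNReal.ofReal (-Real.log (pprod x)) + N * ENNReal.ofReal c0 := by
    refine (Finset.sum_le_sum fun i _ => Finset.sum_le_sum fun k _ => hcc i k).trans ?_
    simp_rw [Finset.sum_add_distrib]
    rw [sum_greenFnE_eq hinj hx1]
    simp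
  have hlog0 : 0 ≤ -Real.log (pprod x) :=
    neg_nonneg.mpr (Real.log_nonpos hpos.le (pprod_le_one hx1))
  have hc0 : 0 ≤ c0 := by
    refine Real.log_nonneg ?_
    rw [le_div_iff₀ hs]
    -- the closed ball lies in the unit disk, so its radius is at most `2`
    have h1 := circleMap_mem_closedBall (x ⟨0, hN⟩) hs.le 0
    have h2 : ‖circleMap (x ⟨0, hN⟩) s 0‖ < 1 := hxD _ h1
    have h3 := norm_sub_le (circleMap (x ⟨0, hN⟩) s 0) (x ⟨0, hN⟩)
    have h4 : ‖circleMap (x ⟨0, hN⟩) s 0 - x ⟨0, hN⟩‖ = s := by simp [circleMap, abs_of_pos hs]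
    linarith [hx1 ⟨0, hN⟩]
  rw [hen]
  calc _ ≤ (N : ℝ≥0∞)⁻¹ * ((N : ℝ≥0∞)⁻¹ *
        (ENNReal.ofReal (-Real.log (pprod x)) + N * ENNReal.ofReal c0)) := by gcongr
    _ = _ := by
      rw [← ENNReal.ofReal_natCast, ← ENNReal.ofReal_inv_of_pos hNr,
        ← ENNReal.ofReal_mul hNr.le, ← ENNReal.ofReal_add hlog0 (by positivity),
        ← ENNReal.ofReal_mul (by positivity), ← ENNReal.ofReal_mul (by positivity)]
      congr 1
      field_simp

/-! ### Approximation numbers of operators on a Hilbert space -/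

/-- If `T` is small on the common kernel of `m` functionals, then composing `T` with the orthogonal
projection onto the span of their Riesz representers gives a good approximant of rank at most `m`. -/
lemma approxNumber_le_of_functionals {H : Type} [NormedAddCommGroup H] [InnerProductSpace ℂ H]
    [CompleteSpace H] (T : H →L[ℂ] H) {m : ℕ} (ev : Fin m → H →L[ℂ] ℂ) {c : ℝ} (hc : 0 ≤ c)
    (h : ∀ g, (∀ i, ev i g = 0) → ‖T g‖ ≤ c * ‖g‖) : approxNumber T (m + 1) ≤ c := by
  set v : Fin m → H := fun i => (InnerProductSpace.toDual ℂ H).symm (ev i) with hv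
  set S : Submodule ℂ H := Submodule.span ℂ (Set.range v) with hS
  have hSfin : FiniteDimensional ℂ S := FiniteDimensional.span_of_finite ℂ (Set.finite_range v)
  set P : H →L[ℂ] H := S.starProjection with hP
  have hrank : Module.rank ℂ (LinearMap.range ((T ∘L P : H →L[ℂ] H) : H →ₗ[ℂ] H)) <
      ((m + 1 : ℕ) : Cardinal) := by
    have h1 : LinearMap.range ((T ∘L P : H →L[ℂ] H) : H →ₗ[ℂ] H) ≤ S.map (T : H →ₗ[ℂ] H) := by
      rintro _ ⟨g, rfl⟩
      exact ⟨P g, S.starProjection_apply_mem g, rfl⟩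
    have h2 : Module.rank ℂ S ≤ (m : Cardinal) := by
      refine (rank_span_le _).trans ?_
      refine Cardinal.mk_range_le.trans ?_
      simp
    refine ((Submodule.rank_mono h1).trans ((rank_map_le _ _).trans h2)).trans_lt ?_
    exact_mod_cast Nat.lt_succ_self m
  have hbdd : BddBelow {c : ℝ | ∃ R : H →L[ℂ] H,
      Module.rank ℂ (LinearMap.range (R : H →ₗ[ℂ] H)) < ((m + 1 : ℕ) : Cardinal) ∧
        c = ‖T - R‖} := by
    refine ⟨0, ?_⟩
    rintro _ ⟨R, -, rfl⟩
    exact norm_nonneg _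
  refine (csInf_le hbdd ⟨T ∘L P, hrank, rfl⟩).trans ?_
  refine ContinuousLinearMap.opNorm_le_bound _ hc fun g => ?_
  have hz : ∀ i, ev i (g - P g) = 0 := by
    intro i
    have h1 : g - P g ∈ Sᗮ := S.sub_starProjection_mem_orthogonal g
    have h2 := (Submodule.mem_orthogonal S _).mp h1 (v i) (Submodule.subset_span ⟨i, rfl⟩)
    rwa [hv, InnerProductSpace.toDual_symm_apply] at h2
  have hn : ‖g - P g‖ ≤ ‖g‖ := by
    have h1 := S.norm_sq_eq_add_norm_sq_starProjection g
    have h2 : Sᗮ.starProjection g = g - P g := by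
      rw [Submodule.starProjection_orthogonal]; rfl
    rw [h2] at h1
    nlinarith [norm_nonneg g, norm_nonneg (g - P g), sq_nonneg ‖P g‖]
  calc ‖(T - T ∘L P) g‖ = ‖T (g - P g)‖ := by simp
    _ ≤ c * ‖g - P g‖ := h _ hz
    _ ≤ c * ‖g‖ := by gcongr

/-- A Bernstein-type lower bound: `T` acts almost diagonally between `N` vectors and
`N` functionals. -/
lemma le_approxNumber_of_diagonal {H : Type} [NormedAddCommGroup H] [InnerProductSpace ℂ H]
    (T : H →L[ℂ] H) {N : ℕ} (hN : 0 < N) (g : Fin N → H) (ev : Fin N → H →L[ℂ] ℂ)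
    {C B q : ℝ} (hC : 0 < C) (hB : 0 < B) (hev : ∀ j h, ‖ev j h‖ ≤ C * ‖h‖) (hg : ∀ j, ‖g j‖ ≤ B)
    (hoff : ∀ j k, j ≠ k → ev j (T (g k)) = 0) (hdiag : ∀ j, q ≤ ‖ev j (T (g j))‖) :
    q / (C * N * B) ≤ approxNumber T N := by
  have hNr : (0 : ℝ) < N := by exact_mod_cast hN
  refine le_csInf ⟨_, 0, ?_, rfl⟩ ?_
  · have : LinearMap.range ((0 : H →L[ℂ] H) : H →ₗ[ℂ] H) = ⊥ := by
      rw [ContinuousLinearMap.toLinearMap_zero, LinearMap.range_zero]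
    rw [this, rank_bot]
    exact_mod_cast hN
  rintro _ ⟨R, hR, rfl⟩
  have hdep : ¬ LinearIndependent ℂ fun k => (⟨R (g k), ⟨g k, rfl⟩⟩ :
      LinearMap.range (R : H →ₗ[ℂ] H)) := by
    intro hli
    have := hli.cardinal_le_rank
    rw [Cardinal.mk_fin] at this
    exact absurd (this.trans_lt hR) (lt_irrefl _)
  obtain ⟨c, hc0, i0, hi0⟩ := Fintype.not_linearIndependent_iff.mp hdep
  obtain ⟨j, -, hj⟩ := Finset.exists_max_image Finset.univ (fun i => ‖c i‖) ⟨i0, Finset.mem_univ _⟩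
  have hcj : 0 < ‖c j‖ := (norm_pos_iff.mpr hi0).trans_le (hj i0 (Finset.mem_univ _))
  set h : H := ∑ k, c k • g k with hh
  have hRh : R h = 0 := by
    have := congrArg Subtype.val hc0
    simpa [hh, map_sum] using this
  have hhn : ‖h‖ ≤ N * ‖c j‖ * B := by
    refine (norm_sum_le _ _).trans ?_
    calc ∑ k, ‖c k • g k‖ ≤ ∑ _k : Fin N, ‖c j‖ * B := by
          refine Finset.sum_le_sum fun k _ => ?_
          rw [norm_smul]
          exact mul_le_mul (hj k (Finset.mem_univ _)) (hg k) (norm_nonneg _) (norm_nonneg _)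
      _ = N * ‖c j‖ * B := by simp [mul_assoc]
  have hevh : ev j (T h) = c j * ev j (T (g j)) := by
    rw [hh, map_sum, map_sum, Finset.sum_eq_single j]
    · simp
    · intro k _ hk
      simp [hoff j k hk.symm]
    · simp
  have h1 : ‖c j‖ * q ≤ C * (‖T - R‖ * (N * ‖c j‖ * B)) := by
    calc ‖c j‖ * q ≤ ‖c j‖ * ‖ev j (T (g j))‖ := by gcongr; exact hdiag j
      _ = ‖ev j ((T - R) h)‖ := by
        rw [sub_apply, hRh, sub_zero, hevh, norm_mul]
      _ ≤ C * ‖(T - R) h‖ := hev _ _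
      _ ≤ C * (‖T - R‖ * ‖h‖) := by gcongr; exact (T - R).le_opNorm h
      _ ≤ _ := by gcongr
  rw [div_le_iff₀ (by positivity)]
  refine le_of_mul_le_mul_left ?_ hcj
  linarith

lemma approxNumber_nonneg {E F : Type*} [NormedAddCommGroup E] [NormedAddCommGroup F]
    [NormedSpace ℂ E] [NormedSpace ℂ F] (T : E →L[ℂ] F) (n : ℕ) : 0 ≤ approxNumber T n :=
  Real.sInf_nonneg (by rintro _ ⟨R, -, rfl⟩; exact norm_nonneg _)

lemma approxNumber_anti {E F : Type*} [NormedAddCommGroup E] [NormedAddCommGroup F]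
    [NormedSpace ℂ E] [NormedSpace ℂ F] (T : E →L[ℂ] F) {m n : ℕ} (hm : 0 < m) (h : m ≤ n) :
    approxNumber T n ≤ approxNumber T m := by
  refine csInf_le_csInf ⟨0, ?_⟩ ⟨_, 0, ?_, rfl⟩ ?_
  · rintro _ ⟨R, -, rfl⟩
    exact norm_nonneg _
  · have : LinearMap.range ((0 : E →L[ℂ] F) : E →ₗ[ℂ] F) = ⊥ := by
      rw [ContinuousLinearMap.toLinearMap_zero, LinearMap.range_zero]
    rw [this, rank_bot]
    exact_mod_cast hm
  · rintro _ ⟨R, hR, rfl⟩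
    exact ⟨R, hR.trans_le (by exact_mod_cast h), rfl⟩

/-! ### Point evaluations and norm estimates in the weighted space -/

/-- The area mean value inequality for a holomorphic function. -/
lemma ofReal_norm_mul_le_lintegral_ball {U : Set ℂ} {h : ℂ → ℂ}
    (hh : DifferentiableOn ℂ h U) {u : ℂ} {ρ : ℝ} (hρ : 0 < ρ) (hb : Metric.ball u ρ ⊆ U) :
    ENNReal.ofReal (Real.pi * ρ ^ 2 * ‖h u‖) ≤
      ∫⁻ z in Metric.ball u ρ, ENNReal.ofReal ‖h z‖ := by
  classical
  have hpi := Real.pi_pos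
  set q : ℂ → ℝ≥0∞ := (Metric.ball u ρ).piecewise (fun z => ENNReal.ofReal ‖h z‖) 0 with hq
  have hqm : Measurable q := by
    refine ContinuousOn.measurable_piecewise ?_ continuousOn_const Metric.isOpen_ball.measurableSet
    exact ENNReal.continuous_ofReal.comp_continuousOn (hh.continuousOn.mono hb).norm
  have hI : ∫⁻ z in Metric.ball u ρ, ENNReal.ofReal ‖h z‖ = ∫⁻ z, q (u + z) := by
    rw [lintegral_add_left_eq_self q u, hq, ← lintegral_indicator Metric.isOpen_ball.measurableSet]
    refine lintegral_congr fun z => ?_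
    by_cases hz : z ∈ Metric.ball u ρ <;> simp [hz]
  have hcirc : ∀ s ∈ Set.Ioo 0 ρ, ENNReal.ofReal (2 * Real.pi * ‖h u‖) ≤
      ∫⁻ θ in Set.Ioo (-Real.pi) Real.pi, q (u + Complex.polarCoord.symm (s, θ)) := by
    intro s hs
    have hmap : ∀ θ, u + Complex.polarCoord.symm (s, θ) = circleMap u s θ := by
      intro θ
      rw [Complex.polarCoord_symm_apply, circleMap, Complex.exp_mul_I]
      simp
    have hmem : ∀ θ, circleMap u s θ ∈ Metric.ball u ρ := by
      intro θ
      rw [Metric.mem_ball, dist_eq_norm, circleMap_sub_center]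
      simpa [abs_of_pos hs.1] using hs.2
    have hval : ∀ θ, q (u + Complex.polarCoord.symm (s, θ)) =
        ENNReal.ofReal ‖h (circleMap u s θ)‖ := by
      intro θ
      rw [hmap, hq, Set.piecewise_eq_of_mem _ _ _ (hmem θ)]
    have hcont : Continuous fun θ => ‖h (circleMap u s θ)‖ :=
      ((hh.continuousOn.mono hb).comp_continuous (continuous_circleMap u s) hmem).norm
    have hsub : Metric.closedBall u s ⊆ U :=
      (Metric.closedBall_subset_ball hs.2).trans hb
    have havg : Real.circleAverage h u s = h u := by
      refine DiffContOnCl.circleAverage ?_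
      rw [abs_of_pos hs.1]
      refine (hh.mono ?_).diffContOnCl
      rw [closure_ball u hs.1.ne']
      exact hsub
    have hper : ∫ θ in (0 : ℝ)..2 * Real.pi, ‖h (circleMap u s θ)‖ =
        ∫ θ in (-Real.pi)..Real.pi, ‖h (circleMap u s θ)‖ := by
      have hp : Function.Periodic (fun θ => ‖h (circleMap u s θ)‖) (2 * Real.pi) := by
        intro θ
        simp only [periodic_circleMap u s θ]
      have := hp.intervalIntegral_add_eq 0 (-Real.pi)
      rw [zero_add] at this
      rw [this]
      congr 1; ring
    have hle : 2 * Real.pi * ‖h u‖ ≤ ∫ θ in (-Real.pi)..Real.pi, ‖h (circleMap u s θ)‖ := by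
      rw [← hper, ← havg, Real.circleAverage_def, norm_smul, Real.norm_eq_abs, abs_inv,
        abs_of_pos (by positivity : 0 < 2 * Real.pi), ← mul_assoc,
        mul_inv_cancel₀ (by positivity), one_mul]
      exact intervalIntegral.norm_integral_le_integral_norm (by positivity)
    simp_rw [hval]
    rw [← ofReal_integral_eq_lintegral_ofReal]
    · refine ENNReal.ofReal_le_ofReal (hle.trans (le_of_eq ?_))
      rw [intervalIntegral.integral_of_le (by linarith), integral_Ioc_eq_integral_Ioo]
    · exact (hcont.integrableOn_Icc (a := -Real.pi) (b := Real.pi)).mono_set Set.Ioo_subset_Icc_self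
    · exact Filter.Eventually.of_forall fun θ => norm_nonneg _
  have hint : ∫⁻ s in Set.Ioo 0 ρ, ENNReal.ofReal s = ENNReal.ofReal (ρ ^ 2 / 2) := by
    rw [← ofReal_integral_eq_lintegral_ofReal]
    · rw [← integral_Ioc_eq_integral_Ioo, ← intervalIntegral.integral_of_le hρ.le, integral_id]
      simp
    · exact (continuous_id.integrableOn_Icc (a := 0) (b := ρ)).mono_set Set.Ioo_subset_Icc_self
    · refine (ae_restrict_iff' measurableSet_Ioo).mpr (Filter.Eventually.of_forall fun s hs => ?_)
      exact hs.1.le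
  have hsymm : Measurable fun p : ℝ × ℝ => Complex.polarCoord.symm p := by
    simp_rw [Complex.polarCoord_symm_apply]
    fun_prop
  rw [hI, ← Complex.lintegral_comp_polarCoord_symm, polarCoord_target,
    Measure.volume_eq_prod, ← Measure.prod_restrict, lintegral_prod]
  · calc ENNReal.ofReal (Real.pi * ρ ^ 2 * ‖h u‖)
        = ENNReal.ofReal (2 * Real.pi * ‖h u‖) * ∫⁻ s in Set.Ioo 0 ρ, ENNReal.ofReal s := by
          rw [hint, ← ENNReal.ofReal_mul (by positivity)]
          congr 1; ring
      _ = ∫⁻ s in Set.Ioo 0 ρ, ENNReal.ofReal (2 * Real.pi * ‖h u‖) * ENNReal.ofReal s := by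
          rw [lintegral_const_mul _ ENNReal.measurable_ofReal]
      _ ≤ ∫⁻ s in Set.Ioo 0 ρ, ∫⁻ θ in Set.Ioo (-Real.pi) Real.pi,
            ENNReal.ofReal s • q (u + Complex.polarCoord.symm (s, θ)) := by
          refine setLIntegral_mono' measurableSet_Ioo fun s hs => ?_
          simp_rw [smul_eq_mul]
          rw [lintegral_const_mul' _ _ ENNReal.ofReal_ne_top, mul_comm]
          gcongr
          exact hcirc s hs
      _ ≤ _ := lintegral_mono_set Set.Ioo_subset_Ioi_self
  · refine Measurable.aemeasurable ?_
    simp_rw [smul_eq_mul]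
    exact (ENNReal.measurable_ofReal.comp measurable_fst).mul
      (hqm.comp (measurable_const.add hsymm))

lemma unitDisk_eq_ball : unitDisk = Metric.ball (0 : ℂ) 1 := by
  ext z; simp [unitDisk]

lemma measurableSet_unitDisk : MeasurableSet unitDisk := isOpen_unitDisk.measurableSet

lemma zero_mem_unitDisk : (0 : ℂ) ∈ unitDisk := by simp [unitDisk]

/-- Radial integrability, in polar coordinates. -/
lemma integrableOn_radial {ω : ℝ → ℝ} (hω_int : IntegrableOn ω (Set.Ico 0 1)) :
    IntegrableOn (fun z : ℂ => ω ‖z‖) unitDisk := by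
  have h1 : Integrable (fun z : ℂ => (Set.Iio (1 : ℝ)).indicator ω ‖z‖) := by
    rw [integrable_fun_norm_addHaar volume (f := (Set.Iio (1 : ℝ)).indicator ω),
      Complex.finrank_real_complex]
    have h2 : IntegrableOn (fun y => y * ω y) (Set.Ico 0 1) := by
      refine Integrable.bdd_mul (c := 1) hω_int (by fun_prop) ?_
      refine (ae_restrict_iff' measurableSet_Ico).mpr (Filter.Eventually.of_forall fun y hy => ?_)
      rw [Real.norm_eq_abs, abs_of_nonneg hy.1]
      exact hy.2.le
    have h3 : IntegrableOn ((Set.Iio (1 : ℝ)).indicator fun y => y * ω y) (Set.Ioi 0) := by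
      rw [integrableOn_indicator_iff measurableSet_Iio]
      exact h2.mono_set fun y hy => ⟨le_of_lt hy.2, hy.1⟩
    refine h3.congr_fun (fun y _ => ?_) measurableSet_Ioi
    by_cases hy : y ∈ Set.Iio (1 : ℝ) <;> simp [hy]
  have h4 : IntegrableOn (fun z : ℂ => (Set.Iio (1 : ℝ)).indicator ω ‖z‖) unitDisk :=
    h1.integrableOn
  refine h4.congr_fun (fun z hz => ?_) measurableSet_unitDisk
  exact Set.indicator_of_mem (show ‖z‖ ∈ Set.Iio (1 : ℝ) from hz) ω

lemma aestronglyMeasurable_deriv_mul {ω : ℝ → ℝ} (hω_cont : ContinuousOn ω (Set.Ico 0 1))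
    {f : ℂ → ℂ} (hf : DifferentiableOn ℂ f unitDisk) :
    AEStronglyMeasurable (fun z => ‖deriv f z‖ ^ 2 * ω ‖z‖) (volume.restrict unitDisk) := by
  refine ContinuousOn.aestronglyMeasurable ?_ measurableSet_unitDisk
  refine (((hf.deriv isOpen_unitDisk).continuousOn.norm).pow 2).mul ?_
  exact hω_cont.comp continuous_norm.continuousOn fun z hz => ⟨norm_nonneg z, hz⟩

lemma memHw_of_deriv_bound {ω : ℝ → ℝ} (hω_cont : ContinuousOn ω (Set.Ico 0 1))
    (hω_pos : ∀ r ∈ Set.Ico (0:ℝ) 1, 0 < ω r)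
    (hω_int : IntegrableOn ω (Set.Ico 0 1)) {f : ℂ → ℂ} (hf : DifferentiableOn ℂ f unitDisk)
    {D : ℝ} (hD : ∀ z ∈ unitDisk, ‖deriv f z‖ ≤ D) : memHw ω f := by
  refine ⟨hf, Integrable.mono' ((integrableOn_radial hω_int).const_mul (D ^ 2))
    (aestronglyMeasurable_deriv_mul hω_cont hf) ?_⟩
  refine (ae_restrict_iff' measurableSet_unitDisk).mpr (Filter.Eventually.of_forall fun z hz => ?_)
  have h0 := (hω_pos ‖z‖ ⟨norm_nonneg z, hz⟩).le
  rw [norm_mul, norm_pow, norm_norm, Real.norm_of_nonneg h0]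
  gcongr
  exact hD z hz

lemma hwNormSq_le {ω : ℝ → ℝ} (hω_pos : ∀ r ∈ Set.Ico (0:ℝ) 1, 0 < ω r) {F : ℂ → ℂ} {v : ℂ → ℝ}
    (hv : IntegrableOn v unitDisk) {A D : ℝ} (hA : ‖F 0‖ ≤ A)
    (hD : ∀ z ∈ unitDisk, ‖deriv F z‖ ^ 2 * ω ‖z‖ ≤ D ^ 2 * v z) :
    hwNormSq ω F ≤ A ^ 2 + D ^ 2 * ((∫ z in unitDisk, v z) / Real.pi) := by
  have h1 : (∫ z in unitDisk, ‖deriv F z‖ ^ 2 * ω ‖z‖) ≤ ∫ z in unitDisk, D ^ 2 * v z := by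
    refine integral_mono_of_nonneg ?_ (hv.const_mul _) ?_
    · refine (ae_restrict_iff' measurableSet_unitDisk).mpr
        (Filter.Eventually.of_forall fun z hz => ?_)
      have h0 := (hω_pos ‖z‖ ⟨norm_nonneg z, hz⟩).le
      exact mul_nonneg (by positivity) h0
    · exact (ae_restrict_iff' measurableSet_unitDisk).mpr (Filter.Eventually.of_forall hD)
  rw [integral_const_mul] at h1
  have hpi := Real.pi_pos
  rw [hwNormSq, ← mul_div_assoc]
  gcongr

/-- Point evaluations are bounded, uniformly on compact disks. -/
lemma exists_eval_bound {ω : ℝ → ℝ} (hω_cont : ContinuousOn ω (Set.Ico 0 1))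
    (hω_pos : ∀ r ∈ Set.Ico (0:ℝ) 1, 0 < ω r) {r : ℝ} (hr0 : 0 ≤ r) (hr : r < 1) :
    ∃ C, 0 < C ∧ ∀ f, memHw ω f → ∀ u, ‖u‖ ≤ r → ‖f u‖ ≤ C * √(hwNormSq ω f) := by
  have hpi := Real.pi_pos
  set ρ := (1 - r) / 2 with hρ
  have hρ0 : 0 < ρ := by rw [hρ]; linarith
  obtain ⟨t0, ht0, hmin⟩ := (isCompact_Icc (a := (0 : ℝ)) (b := r + ρ)).exists_isMinOn
    ⟨0, le_rfl, by linarith⟩ (hω_cont.mono fun t ht => ⟨ht.1, by linarith [ht.2]⟩)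
  set m := ω t0 with hm
  have hm0 : 0 < m := hω_pos t0 ⟨ht0.1, by linarith [ht0.2]⟩
  refine ⟨1 + √(1 / (m * ρ ^ 2)), by positivity, fun f hf u hu => ?_⟩
  set I := ∫ z in unitDisk, ‖deriv f z‖ ^ 2 * ω ‖z‖ with hI
  have hωnn : ∀ z ∈ unitDisk, 0 ≤ ‖deriv f z‖ ^ 2 * ω ‖z‖ := fun z hz =>
    mul_nonneg (by positivity) (hω_pos ‖z‖ ⟨norm_nonneg z, hz⟩).le
  have hI0 : 0 ≤ I := setIntegral_nonneg measurableSet_unitDisk hωnn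
  have hn : hwNormSq ω f = ‖f 0‖ ^ 2 + I / Real.pi := rfl
  have hI1 : I / Real.pi ≤ hwNormSq ω f := by rw [hn]; nlinarith [sq_nonneg ‖f 0‖]
  have hf0 : ‖f 0‖ ≤ √(hwNormSq ω f) := by
    apply Real.le_sqrt_of_sq_le
    rw [hn]
    have : 0 ≤ I / Real.pi := by positivity
    linarith
  have hder : ∀ w ∈ Metric.closedBall (0 : ℂ) r,
      ‖deriv f w‖ ≤ √(1 / (m * ρ ^ 2)) * √(hwNormSq ω f) := by
    intro w hw
    rw [mem_closedBall_zero_iff] at hw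
    rw [← Real.sqrt_mul (by positivity)]
    apply Real.le_sqrt_of_sq_le
    have hball : Metric.ball w ρ ⊆ unitDisk := by
      intro z hz
      have h1 := norm_sub_norm_le z w
      rw [Metric.mem_ball, dist_eq_norm] at hz
      change ‖z‖ < 1
      linarith
    have h1 := ofReal_norm_mul_le_lintegral_ball (h := fun z => deriv f z ^ 2)
      ((hf.1.deriv isOpen_unitDisk).pow 2) hρ0 hball
    have h2 : ENNReal.ofReal m * ∫⁻ z in Metric.ball w ρ, ENNReal.ofReal ‖deriv f z ^ 2‖ ≤
        ENNReal.ofReal I := by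
      rw [hI, ofReal_integral_eq_lintegral_ofReal hf.2
        ((ae_restrict_iff' measurableSet_unitDisk).mpr (Filter.Eventually.of_forall hωnn)),
        ← lintegral_const_mul' _ _ ENNReal.ofReal_ne_top]
      refine le_trans ?_ (lintegral_mono_set hball)
      refine setLIntegral_mono' Metric.isOpen_ball.measurableSet fun z hz => ?_
      rw [← ENNReal.ofReal_mul hm0.le, norm_pow]
      refine ENNReal.ofReal_le_ofReal ?_
      rw [mul_comm]
      gcongr
      refine hmin ⟨norm_nonneg z, ?_⟩
      have h1 := norm_sub_norm_le z w
      rw [Metric.mem_ball, dist_eq_norm] at hz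
      linarith
    have h3 : ENNReal.ofReal m * ENNReal.ofReal (Real.pi * ρ ^ 2 * ‖deriv f w ^ 2‖) ≤
        ENNReal.ofReal I := le_trans (by gcongr) h2
    rw [← ENNReal.ofReal_mul hm0.le, ENNReal.ofReal_le_ofReal_iff hI0, norm_pow] at h3
    calc ‖deriv f w‖ ^ 2 = 1 / (m * ρ ^ 2) * ((m * (Real.pi * ρ ^ 2 * ‖deriv f w‖ ^ 2)) / Real.pi) := by
          field_simp
      _ ≤ 1 / (m * ρ ^ 2) * (I / Real.pi) := by gcongr
      _ ≤ _ := by gcongr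
  have hmv := (convex_closedBall (0 : ℂ) r).norm_image_sub_le_of_norm_deriv_le (𝕜 := ℂ) (f := f)
    (fun w hw => ?_) hder (Metric.mem_closedBall_self hr0) (mem_closedBall_zero_iff.mpr hu)
  · have h5 : ‖f u‖ ≤ ‖f u - f 0‖ + ‖f 0‖ := by
      simpa using norm_add_le (f u - f 0) (f 0)
    rw [sub_zero] at hmv
    have h6 : √(1 / (m * ρ ^ 2)) * √(hwNormSq ω f) * ‖u‖ ≤ √(1 / (m * ρ ^ 2)) * √(hwNormSq ω f) :=
      mul_le_of_le_one_right (by positivity) (by linarith)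
    linarith
  · refine hf.1.differentiableAt (isOpen_unitDisk.mem_nhds ?_)
    rw [mem_closedBall_zero_iff] at hw
    exact lt_of_le_of_lt hw hr

/-- A product of `N` Blaschke factors with zeros in a compact disk has derivative `O(N)`. -/
lemma prod_bf_bounds {r : ℝ} (hr : r < 1) {ι : Type*} [Fintype ι] {x : ι → ℂ}
    (hx : ∀ i, ‖x i‖ ≤ r) :
    DifferentiableOn ℂ (fun z => ∏ i, bf (x i) z) unitDisk ∧
    (∀ z ∈ unitDisk, ‖∏ i, bf (x i) z‖ ≤ 1) ∧
    ∀ z ∈ unitDisk, ‖deriv (fun z => ∏ i, bf (x i) z) z‖ ≤ Fintype.card ι * (1 / (1 - r) ^ 2) := by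
  classical
  have hx1 : ∀ i, ‖x i‖ < 1 := fun i => (hx i).trans_lt hr
  have hle : ∀ s : Finset ι, ∀ z ∈ unitDisk, ‖∏ i ∈ s, bf (x i) z‖ ≤ 1 := by
    intro s z hz
    rw [norm_prod]
    exact Finset.prod_le_one (fun i _ => norm_nonneg _) fun i _ => norm_bf_le_one (hx1 i) (le_of_lt hz)
  refine ⟨?_, fun z hz => hle _ z hz, fun z hz => ?_⟩
  · exact DifferentiableOn.fun_finsetProd fun i _ => bf_differentiableOn (hx1 i)
  · have hd : ∀ i, HasDerivAt (bf (x i)) (deriv (bf (x i)) z) z := fun i =>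
      (bf_hasDerivAt (hx1 i) (le_of_lt hz)).differentiableAt.hasDerivAt
    have h1 := HasDerivAt.fun_finsetProd (u := Finset.univ) (f := fun i => bf (x i))
      fun i _ => hd i
    rw [h1.deriv]
    refine (norm_sum_le _ _).trans ?_
    refine (Finset.sum_le_card_nsmul _ _ (1 / (1 - r) ^ 2) fun i _ => ?_).trans (le_of_eq (by simp))
    rw [norm_smul]
    calc _ ≤ 1 * (1 / (1 - r) ^ 2) := by
          gcongr
          · exact hle _ z hz
          · exact norm_deriv_bf_le hr (hx i) (le_of_lt hz)
      _ = _ := one_mul _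

/-! ### Approximation numbers of the composition operator and point configurations -/

lemma exists_evalCLM {ω : ℝ → ℝ} (hω_cont : ContinuousOn ω (Set.Ico 0 1))
    (hω_pos : ∀ r ∈ Set.Ico (0:ℝ) 1, 0 < ω r)
    {H : Type} [NormedAddCommGroup H] [InnerProductSpace ℂ H]
    {ι : H →ₗ[ℂ] (ℂ → ℂ)} (hι_mem : ∀ g : H, memHw ω (ι g))
    (hι_norm : ∀ g : H, ‖g‖ ^ 2 = hwNormSq ω (ι g)) {r : ℝ} (hr0 : 0 ≤ r) (hr : r < 1) :
    ∃ C, 0 < C ∧ ∀ u, ‖u‖ ≤ r → ∃ ev : H →L[ℂ] ℂ, ∀ g, ev g = ι g u ∧ ‖ι g u‖ ≤ C * ‖g‖ := by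
  obtain ⟨C, hC, h⟩ := exists_eval_bound hω_cont hω_pos hr0 hr
  have hb : ∀ u, ‖u‖ ≤ r → ∀ g, ‖ι g u‖ ≤ C * ‖g‖ := by
    intro u hu g
    have := h (ι g) (hι_mem g) u hu
    rwa [← hι_norm, Real.sqrt_sq (norm_nonneg g)] at this
  exact ⟨C, hC, fun u hu => ⟨((LinearMap.proj u).comp ι).mkContinuous C (hb u hu),
    fun g => ⟨rfl, hb u hu g⟩⟩⟩

/-- Lower bound: composing with `φ` the Blaschke products that vanish at all points of a
configuration but one gives an almost diagonal action on point evaluations. -/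
lemma exists_lower_config {ω : ℝ → ℝ} (hω_cont : ContinuousOn ω (Set.Ico 0 1))
    (hω_pos : ∀ r ∈ Set.Ico (0:ℝ) 1, 0 < ω r) (hω_int : IntegrableOn ω (Set.Ico 0 1))
    {H : Type} [NormedAddCommGroup H] [InnerProductSpace ℂ H]
    {ι : H →ₗ[ℂ] (ℂ → ℂ)} (hι_mem : ∀ g : H, memHw ω (ι g))
    (hι_norm : ∀ g : H, ‖g‖ ^ 2 = hwNormSq ω (ι g))
    (hι_surj : ∀ f : ℂ → ℂ, memHw ω f → ∃ g : H, ∀ z ∈ unitDisk, ι g z = f z)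
    {φ : ℂ → ℂ} (hφ_maps : Set.MapsTo φ unitDisk unitDisk) {Cφ : H →L[ℂ] H}
    (hCφ : ∀ g : H, ∀ z ∈ unitDisk, ι (Cφ g) z = ι g (φ z))
    {r r0 : ℝ} (hr0 : 0 ≤ r) (hr : r < 1) (hr1 : r0 < 1) :
    ∃ c, 0 < c ∧ ∀ (N : ℕ) (x : Fin (N + 1) → ℂ), (∀ i, x i ∈ φ '' Metric.closedBall 0 r) →
      (∀ i, ‖x i‖ ≤ r0) → ∀ q, (∀ j, q ≤ ∏ i, ‖bf (x (j.succAbove i)) (x j)‖) →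
        c * q / ((N : ℝ) + 1) ^ 2 ≤ approxNumber Cφ (N + 1) := by
  obtain ⟨C, hC, hev⟩ := exists_evalCLM hω_cont hω_pos hι_mem hι_norm hr0 hr
  have hpi := Real.pi_pos
  set W := (∫ z in unitDisk, ω ‖z‖) / Real.pi with hW
  have hW0 : 0 ≤ W := by
    refine div_nonneg (setIntegral_nonneg measurableSet_unitDisk fun z hz => ?_) hpi.le
    exact (hω_pos ‖z‖ ⟨norm_nonneg z, hz⟩).le
  set κ := 1 / (1 - r0) ^ 2
  set B := √(1 + κ ^ 2 * W) with hB
  have hB0 : 0 < B := by positivity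
  refine ⟨1 / (C * B), by positivity, fun N x hxφ hx q hq => ?_⟩
  choose u hu hux using hxφ
  have huD : ∀ i, u i ∈ unitDisk := fun i =>
    lt_of_le_of_lt (mem_closedBall_zero_iff.mp (hu i)) hr
  have hN : (0 : ℝ) < (N : ℝ) + 1 := by positivity
  have hfun : ∀ j : Fin (N + 1), ∃ g : H, (∀ z ∈ unitDisk, ι g z =
      ∏ i, bf (x (j.succAbove i)) z) ∧ ‖g‖ ≤ ((N : ℝ) + 1) * B := by
    intro j
    obtain ⟨h1, h2, h3⟩ := prod_bf_bounds hr1 (x := fun i => x (j.succAbove i)) fun i => hx _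
    obtain ⟨g, hg⟩ := hι_surj _ (memHw_of_deriv_bound hω_cont hω_pos hω_int h1 h3)
    refine ⟨g, hg, ?_⟩
    have hderiv : ∀ z ∈ unitDisk, deriv (ι g) z =
        deriv (fun z => ∏ i, bf (x (j.succAbove i)) z) z := fun z hz =>
      Filter.EventuallyEq.deriv_eq
        (Filter.eventually_of_mem (isOpen_unitDisk.mem_nhds hz) hg)
    have h4 : hwNormSq ω (ι g) ≤ 1 ^ 2 + ((N : ℝ) * κ) ^ 2 * W := by
      refine hwNormSq_le hω_pos (integrableOn_radial hω_int) ?_ fun z hz => ?_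
      · rw [hg 0 zero_mem_unitDisk]
        exact h2 0 zero_mem_unitDisk
      · have h0 := (hω_pos ‖z‖ ⟨norm_nonneg z, hz⟩).le
        have h5 := h3 z hz
        rw [Fintype.card_fin] at h5
        rw [hderiv z hz]
        gcongr
    rw [← hι_norm] at h4
    refine abs_le_of_sq_le_sq' ?_ (by positivity) |>.2
    rw [mul_pow, hB, Real.sq_sqrt (by positivity)]
    refine h4.trans ?_
    have h6 : 0 ≤ κ ^ 2 * W := by positivity
    have h7 : (0 : ℝ) ≤ N := Nat.cast_nonneg N
    nlinarith [mul_nonneg h7 h6, mul_nonneg h7 h7]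
  choose g hg hgB using hfun
  choose ev hevg using fun j => hev (u j) (mem_closedBall_zero_iff.mp (hu j))
  have hval : ∀ j k, ev j (Cφ (g k)) = ∏ i, bf (x (k.succAbove i)) (x j) := by
    intro j k
    rw [(hevg j _).1, hCφ _ _ (huD j), hg k _ (hφ_maps (huD j)), hux]
  have hmain := le_approxNumber_of_diagonal Cφ N.succ_pos g ev (C := C)
    (B := ((N : ℝ) + 1) * B) (q := q) hC (by positivity)
    (fun j h => by rw [(hevg j h).1]; exact (hevg j h).2) hgB ?_ ?_
  · refine le_trans (le_of_eq ?_) hmain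
    push_cast
    field_simp
  · intro j k hjk
    rw [hval]
    obtain ⟨i, hi⟩ := Fin.exists_succAbove_eq hjk
    exact Finset.prod_eq_zero (Finset.mem_univ i) (by rw [hi, bf_self])
  · intro j
    rw [hval, norm_prod]
    exact hq j

/-- Upper bound: a function vanishing at the points of a configuration is dominated, away from the
unit circle, by the Blaschke product of the configuration, and Cauchy's estimate transfers this to
the norm of its composition with `φ`. -/
lemma exists_upper_config {ω : ℝ → ℝ} (hω_cont : ContinuousOn ω (Set.Ico 0 1))
    (hω_pos : ∀ r ∈ Set.Ico (0:ℝ) 1, 0 < ω r)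
    {H : Type} [NormedAddCommGroup H] [InnerProductSpace ℂ H] [CompleteSpace H]
    {ι : H →ₗ[ℂ] (ℂ → ℂ)} (hι_mem : ∀ g : H, memHw ω (ι g))
    (hι_norm : ∀ g : H, ‖g‖ ^ 2 = hwNormSq ω (ι g))
    {φ : ℂ → ℂ} (hφ_mem : memHw ω φ) (hφ_maps : Set.MapsTo φ unitDisk unitDisk) {Cφ : H →L[ℂ] H}
    (hCφ : ∀ g : H, ∀ z ∈ unitDisk, ι (Cφ g) z = ι g (φ z))
    {r0 δ ε : ℝ} (hr0 : 0 ≤ r0) (hδ : 0 < δ) (hr1 : r0 + δ < 1) (hε : 0 < ε)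
    (hφr : ∀ z ∈ unitDisk, ‖φ z‖ ≤ r0) :
    ∃ C, 0 < C ∧ ∀ (m : ℕ) (x : Fin m → ℂ), Function.Injective x → (∀ i, ‖x i‖ ≤ r0) →
      ∀ M, 0 ≤ M → (∀ z ∈ φ '' unitDisk, ∀ t ∈ Metric.closedBall z δ,
        ∏ i, ‖bf (x i) t‖ ≤ M) →
        approxNumber Cφ (m + 1) ≤ C * (Real.exp (m * ε) * M) := by
  obtain ⟨R, hR1, hR2, hbf⟩ := exists_radius_bf_ge (r := r0 + δ) (by positivity) hr1 hε
  have hR0 : 0 < R := by linarith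
  obtain ⟨C, hC, hev⟩ := exists_evalCLM hω_cont hω_pos hι_mem hι_norm hR0.le hR2
  have hpi := Real.pi_pos
  set W := (∫ z in unitDisk, ‖deriv φ z‖ ^ 2 * ω ‖z‖) / Real.pi with hW
  have hW0 : 0 ≤ W := by
    refine div_nonneg (setIntegral_nonneg measurableSet_unitDisk fun z hz => ?_) hpi.le
    exact mul_nonneg (by positivity) (hω_pos ‖z‖ ⟨norm_nonneg z, hz⟩).le
  set B := √(1 + (1 / δ) ^ 2 * W) with hB
  have hB0 : 0 < B := by positivity
  refine ⟨C * B, by positivity, fun m x hinj hx M hM hMx => ?_⟩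
  have hxD : ∀ i, x i ∈ unitDisk := fun i => lt_of_le_of_lt (hx i) (by linarith)
  have hRD : Metric.closedBall (0 : ℂ) R ⊆ unitDisk := fun z hz =>
    lt_of_le_of_lt (mem_closedBall_zero_iff.mp hz) hR2
  choose ev hevg using fun i => hev (x i) ((hx i).trans (by linarith))
  refine approxNumber_le_of_functionals Cφ ev (by positivity) fun g hg => ?_
  have hf := (hι_mem g).1
  have hvan : ∀ i, ι g (x i) = 0 := fun i => (hevg i g).1 ▸ hg i
  set L := C * ‖g‖ * Real.exp (m * ε) with hL
  have hL0 : 0 ≤ L := by positivity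
  have hmax : ∀ z ∈ Metric.closedBall (0 : ℂ) R, ‖ι g z‖ ≤ L * ∏ i, ‖bf (x i) z‖ := by
    refine norm_le_of_zeros isOpen_unitDisk hR0 hRD hinj (fun i => ?_)
      (e := fun i z => 1 - (starRingEnd ℂ) (x i) * z) (fun i => by fun_prop)
      (fun i z hz => one_sub_conj_mul_ne (hxD i) (le_of_lt hz)) hf hvan fun t ht => ?_
    · rw [mem_ball_zero_iff]
      linarith [hx i]
    · rw [mem_sphere_zero_iff_norm] at ht
      obtain ⟨evt, h0⟩ := hev t ht.le
      have h1 := (h0 g).2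
      have h2 : Real.exp (-(m * ε)) ≤ ∏ i, ‖bf (x i) t‖ := by
        calc Real.exp (-(m * ε)) = ∏ _i : Fin m, Real.exp (-ε) := by
              rw [Finset.prod_const, Finset.card_univ, Fintype.card_fin, ← Real.exp_nat_mul]
              ring_nf
          _ ≤ _ := Finset.prod_le_prod (fun _ _ => (Real.exp_pos _).le) fun i _ =>
              hbf t (x i) ht ((hx i).trans (by linarith))
      calc ‖ι g t‖ ≤ C * ‖g‖ := h1
        _ = L * Real.exp (-(m * ε)) := by
          rw [hL, mul_assoc, ← Real.exp_add, add_neg_cancel, Real.exp_zero, mul_one]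
        _ ≤ L * ∏ i, ‖bf (x i) t‖ := by gcongr
  have hball : ∀ z ∈ φ '' unitDisk, Metric.closedBall z δ ⊆ Metric.closedBall 0 R := by
    rintro _ ⟨z, hz, rfl⟩ t ht
    rw [mem_closedBall_zero_iff]
    have h1 := norm_sub_norm_le t (φ z)
    rw [Metric.mem_closedBall, dist_eq_norm] at ht
    linarith [hφr z hz]
  have hval : ∀ z ∈ φ '' unitDisk, ∀ t ∈ Metric.closedBall z δ, ‖ι g t‖ ≤ L * M := by
    intro z hz t ht
    exact (hmax t (hball z hz ht)).trans (by gcongr; exact hMx z hz t ht)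
  have hder : ∀ z ∈ φ '' unitDisk, ‖deriv (ι g) z‖ ≤ L * M / δ := by
    intro z hz
    refine Complex.norm_deriv_le_of_forall_mem_sphere_norm_le hδ ?_
      fun t ht => hval z hz t (Metric.sphere_subset_closedBall ht)
    refine (hf.mono ?_).diffContOnCl
    rw [closure_ball z hδ.ne']
    exact (hball z hz).trans hRD
  have hnorm : hwNormSq ω (ι (Cφ g)) ≤ (L * M) ^ 2 + (L * M / δ) ^ 2 * W := by
    refine hwNormSq_le hω_pos hφ_mem.2 ?_ fun z hz => ?_
    · rw [hCφ g 0 zero_mem_unitDisk]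
      exact hval _ ⟨0, zero_mem_unitDisk, rfl⟩ _ (Metric.mem_closedBall_self hδ.le)
    · have h0 := (hω_pos ‖z‖ ⟨norm_nonneg z, hz⟩).le
      have h1 : deriv (ι (Cφ g)) z = deriv (ι g ∘ φ) z :=
        Filter.EventuallyEq.deriv_eq
          (Filter.eventually_of_mem (isOpen_unitDisk.mem_nhds hz) (hCφ g))
      have h2 : deriv (ι g ∘ φ) z = deriv (ι g) (φ z) * deriv φ z :=
        deriv_comp z (hf.differentiableAt (isOpen_unitDisk.mem_nhds (hφ_maps hz)))
          (hφ_mem.1.differentiableAt (isOpen_unitDisk.mem_nhds hz))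
      rw [h1, h2, norm_mul, mul_pow, mul_assoc]
      gcongr
      exact hder _ ⟨z, hz, rfl⟩
  rw [← hι_norm] at hnorm
  refine abs_le_of_sq_le_sq' ?_ (by positivity) |>.2
  refine hnorm.trans (le_of_eq ?_)
  have h3 : C * B * (Real.exp (m * ε) * M) * ‖g‖ = L * M * B := by rw [hL]; ring
  rw [h3, mul_pow _ B, hB, Real.sq_sqrt (by positivity)]
  field_simp

/-! ### Extremal configurations on compact subsets of the image -/

/-- Compact subsets of the open set `φ(D)` are already covered by the image of a smaller disk. -/
lemma exists_radius_image {φ : ℂ → ℂ}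
    (hopen : ∀ s ⊆ unitDisk, IsOpen s → IsOpen (φ '' s)) {L : Set ℂ} (hL : IsCompact L)
    (hLG : L ⊆ φ '' unitDisk) :
    ∃ r, r < 1 ∧ ∀ r', r ≤ r' → L ⊆ φ '' Metric.closedBall 0 r' := by
  set ρ : ℕ → ℝ := fun n => 1 - 1 / ((n : ℝ) + 1) with hρ
  have hρ1 : ∀ n, ρ n < 1 := fun n => by
    have : 0 < 1 / ((n : ℝ) + 1) := by positivity
    simp only [hρ]; linarith
  have hmono : Monotone fun n => φ '' Metric.ball 0 (ρ n) := by
    intro m n hmn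
    refine Set.image_mono (Metric.ball_subset_ball ?_)
    have : (m : ℝ) ≤ n := by exact_mod_cast hmn
    simp only [hρ]
    gcongr
  obtain ⟨n, hn⟩ := hL.elim_directed_cover (fun n => φ '' Metric.ball 0 (ρ n))
    (fun n => hopen _ (fun z hz => (mem_ball_zero_iff.mp hz).trans (hρ1 n)) Metric.isOpen_ball)
    (fun w hw => by
      obtain ⟨z, hz, rfl⟩ := hLG hw
      have hz1 : ‖z‖ < 1 := hz
      obtain ⟨n, hn⟩ := exists_nat_one_div_lt (sub_pos.mpr hz1)
      refine Set.mem_iUnion.mpr ⟨n, z, ?_, rfl⟩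
      rw [mem_ball_zero_iff]
      simp only [hρ]; linarith) hmono.directed_le
  refine ⟨ρ n, hρ1 n, fun r' hr' => hn.trans (Set.image_mono ?_)⟩
  exact Metric.ball_subset_closedBall.trans (Metric.closedBall_subset_closedBall hr')

/-- Compact sets `K = φ({|z| ≤ r})` that nearly exhaust `φ(D)`, metrically and in energy, together
with configurations of minimal energy on `K`. -/
lemma exists_extremal {φ : ℂ → ℂ} (hφ_diff : DifferentiableOn ℂ φ unitDisk)
    (hφ_maps : Set.MapsTo φ unitDisk unitDisk)
    (hopen : ∀ s ⊆ unitDisk, IsOpen s → IsOpen (φ '' s))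
    {ε δ r1 : ℝ} (hε : 0 < ε) (hδ : 0 < δ) (hr1 : r1 < 1) :
    ∃ r, 0 ≤ r ∧ r < 1 ∧ r1 ≤ r ∧
      (∀ z ∈ φ '' unitDisk, ∃ a ∈ φ '' Metric.closedBall 0 r, dist z a < δ) ∧
      ∃ x : ∀ N, Fin N → ℂ, (∀ N i, x N i ∈ φ '' Metric.closedBall 0 r) ∧
        (∀ N (y : Fin N → ℂ), (∀ i, y i ∈ φ '' Metric.closedBall 0 r) →
          pprod y ≤ pprod (x N)) ∧
        (∀ N, 0 < pprod (x N)) ∧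
        (∀ N : ℕ, -Real.log (pprod (x N)) ≤ (N : ℝ) ^ 2 * ((greenV (φ '' unitDisk)).toReal + ε)) ∧
        ∃ L, 0 ≤ L ∧ ∀ N : ℕ, (N : ℝ) ^ 2 * (greenV (φ '' unitDisk)).toReal - N * L ≤
          -Real.log (pprod (x N)) := by
  set G := φ '' unitDisk with hG
  have hGo : IsOpen G := hopen _ subset_rfl isOpen_unitDisk
  have hGD : G ⊆ unitDisk := hφ_maps.image_subset
  have h0G : φ 0 ∈ G := ⟨0, zero_mem_unitDisk, rfl⟩
  have hfin : greenV G ≠ ⊤ := by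
    obtain ⟨s, hs, hsG⟩ := Metric.nhds_basis_closedBall.mem_iff.mp (hGo.mem_nhds h0G)
    refine ((greenV_le_of_config hGD hs one_pos (x := fun _ : Fin 1 => φ 0) (fun _ => hsG) ?_).trans_lt
      ENNReal.ofReal_lt_top).ne
    simp [pprod]
  set V := (greenV G).toReal with hV
  have hlt : greenV G < ENNReal.ofReal (V + ε) := by
    rw [← ENNReal.ofReal_toReal hfin]
    exact (ENNReal.ofReal_lt_ofReal_iff (by positivity)).mpr (by linarith)
  obtain ⟨μ, hμ⟩ := iInf_lt_iff.mp hlt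
  obtain ⟨hμp, hμ⟩ := iInf_lt_iff.mp hμ
  obtain ⟨⟨K0, hK0G, hK0, hμK⟩, hμ⟩ := iInf_lt_iff.mp hμ
  obtain ⟨ra, hra, hKa⟩ := exists_radius_image hopen hK0 hK0G
  have htb : TotallyBounded G := by
    refine (isCompact_closedBall (0 : ℂ) 1).totallyBounded.subset fun z hz => ?_
    rw [mem_closedBall_zero_iff]
    exact le_of_lt (hGD hz)
  obtain ⟨T, hTG, hTf, hT⟩ := Metric.finite_approx_of_totallyBounded htb δ hδ
  obtain ⟨rb, hrb, hKb⟩ := exists_radius_image hopen hTf.isCompact hTG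
  set r := max (max ra rb) (max r1 0) with hr
  have hr_lt : r < 1 := by simp [hr, hra, hrb, hr1]
  have hrD : Metric.closedBall (0 : ℂ) r ⊆ unitDisk := fun z hz =>
    (mem_closedBall_zero_iff.mp hz).trans_lt hr_lt
  set K := φ '' Metric.closedBall 0 r with hK
  have hKG : K ⊆ G := Set.image_mono hrD
  have hKc : IsCompact K :=
    (isCompact_closedBall _ _).image_of_continuousOn (hφ_diff.continuousOn.mono hrD)
  have hr0 : 0 ≤ r := (le_max_right r1 0).trans (le_max_right _ _)
  have hKne : K.Nonempty := ⟨φ 0, 0, Metric.mem_closedBall_self hr0, rfl⟩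
  refine ⟨r, hr0, hr_lt, (le_max_left r1 0).trans (le_max_right _ _), fun z hz => ?_, ?_⟩
  · obtain ⟨a, ha, hza⟩ := Set.mem_iUnion₂.mp (hT hz)
    exact ⟨a, hKb r ((le_max_right ra rb).trans (le_max_left _ _)) ha, hza⟩
  choose x hxK hmax using exists_max_pprod hKc hKne (hKG.trans hGD)
  have hμfin : greenEnergy μ ≠ ⊤ := (hμ.trans ENNReal.ofReal_lt_top).ne
  have hμI : (greenEnergy μ).toReal ≤ V + ε :=
    ENNReal.toReal_le_of_le_ofReal (by positivity) hμ.le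
  have hμK' : μ Kᶜ = 0 := measure_mono_null (Set.compl_subset_compl.mpr
    (hKa r ((le_max_left ra rb).trans (le_max_left _ _)))) hμK
  have hpos : ∀ N : ℕ, 0 < pprod (x N) ∧ -Real.log (pprod (x N)) ≤ (N : ℝ) ^ 2 * (V + ε) := by
    intro N
    obtain ⟨y, hyK, hy0, hy⟩ := exists_config_of_energy (hKG.trans hGD) hμK' hμfin N
    have h1 := hmax N y hyK
    refine ⟨hy0.trans_le h1, ?_⟩
    have h2 := Real.log_le_log hy0 h1
    have h3 : (N : ℝ) ^ 2 * (greenEnergy μ).toReal ≤ (N : ℝ) ^ 2 * (V + ε) := by gcongr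
    linarith
  obtain ⟨s, hs, hsG⟩ := hKc.exists_cthickening_subset_open hGo hKG
  refine ⟨x, hxK, hmax, fun N => (hpos N).1, fun N => (hpos N).2, |Real.log (2 / s)|,
    abs_nonneg _, fun N => ?_⟩
  rcases Nat.eq_zero_or_pos N with rfl | hN
  · simp [pprod]
  have h1 := greenV_le_of_config hGD hs hN (x := x N)
    (fun i => (Metric.closedBall_subset_cthickening (hxK N i) s).trans hsG) (hpos N).1
  have hE : 0 ≤ -Real.log (pprod (x N)) := neg_nonneg.mpr
    (Real.log_nonpos (hpos N).1.le (pprod_le_one fun i => hGD (hKG (hxK N i))))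
  have hNr : (0 : ℝ) < N := by exact_mod_cast hN
  have h2 : greenV G ≤ ENNReal.ofReal
      ((-Real.log (pprod (x N)) + N * |Real.log (2 / s)|) / (N : ℝ) ^ 2) := by
    refine h1.trans (ENNReal.ofReal_le_ofReal ?_)
    gcongr
    exact le_abs_self _
  have h3 := ENNReal.toReal_le_of_le_ofReal (by positivity) h2
  rw [le_div_iff₀ (by positivity)] at h3
  linarith

/-- In an extremal configuration each point is separated from the others at least as well as the
increment of the minimal energies predicts. -/
lemma exp_le_prod_of_extremal {K : Set ℂ} {x : ∀ N, Fin N → ℂ} (hxK : ∀ N i, x N i ∈ K)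
    (hmax : ∀ N (y : Fin N → ℂ), (∀ i, y i ∈ K) → pprod y ≤ pprod (x N))
    (hpos : ∀ N, 0 < pprod (x N)) (N : ℕ) (j : Fin (N + 1)) :
    Real.exp (-((-Real.log (pprod (x (N + 1))) - -Real.log (pprod (x N))) / 2)) ≤
      ∏ i, ‖bf (x (N + 1) (j.succAbove i)) (x (N + 1) j)‖ := by
  have h1 := pprod_succAbove (x (N + 1)) j
  set Q := ∏ i, ‖bf (x (N + 1) (j.succAbove i)) (x (N + 1) j)‖
  have hQ0 : 0 ≤ Q := Finset.prod_nonneg fun _ _ => norm_nonneg _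
  have h2 := hmax N (fun i => x (N + 1) (j.succAbove i)) fun i => hxK _ _
  refine abs_le_of_sq_le_sq' ?_ hQ0 |>.2
  rw [← Real.exp_nat_mul]
  have h3 : ((2 : ℕ) : ℝ) * -((-Real.log (pprod (x (N + 1))) - -Real.log (pprod (x N))) / 2) =
      Real.log (pprod (x (N + 1))) - Real.log (pprod (x N)) := by push_cast; ring
  rw [h3, Real.exp_sub, Real.exp_log (hpos _), Real.exp_log (hpos _), div_le_iff₀ (hpos _), h1]
  gcongr

/-- Some point of an extremal configuration has a small Blaschke product with respect to the
others; by extremality that product is then small on all of `K`. -/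
lemma exists_prod_le_of_extremal {K : Set ℂ} {m : ℕ} {x : Fin (m + 1) → ℂ} (hxK : ∀ i, x i ∈ K)
    (hmax : ∀ y : Fin (m + 1) → ℂ, (∀ i, y i ∈ K) → pprod y ≤ pprod x) (hpos : 0 < pprod x)
    {A : ℝ} (hA : ((m : ℝ) + 1) * A ≤ -Real.log (pprod x)) :
    ∃ j : Fin (m + 1), ∀ z ∈ K, ∏ i, ‖bf (x (j.succAbove i)) z‖ ≤ Real.exp (-A) := by
  set q : Fin (m + 1) → ℝ := fun j => ∏ i, ‖bf (x (j.succAbove i)) (x j)‖ with hq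
  have hj : ∃ j, q j ≤ Real.exp (-A) := by
    by_contra! hcon
    have h1 : ∏ _j : Fin (m + 1), Real.exp (-A) < ∏ j, q j :=
      Finset.prod_lt_prod_of_nonempty (fun _ _ => Real.exp_pos _) (fun j _ => hcon j)
        Finset.univ_nonempty
    rw [← pprod_eq_prod, Finset.prod_const, Finset.card_univ, Fintype.card_fin, ← Real.exp_nat_mul]
      at h1
    have h2 := Real.log_lt_log (Real.exp_pos _) h1
    rw [Real.log_exp] at h2
    push_cast at h2
    linarith
  obtain ⟨j, hj⟩ := hj
  refine ⟨j, fun z hz => le_trans ?_ hj⟩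
  have h1 := pprod_succAbove x j
  have h2 := pprod_succAbove (Function.update x j z) j
  have h3 := hmax (Function.update x j z) fun i => by
    by_cases h : i = j
    · subst h; simpa using hz
    · rw [Function.update_of_ne h]; exact hxK i
  simp only [Function.update_self, Function.update_of_ne (Fin.succAbove_ne j _)] at h2
  rw [h1, h2] at h3
  have hP : 0 < pprod fun i => x (j.succAbove i) := by
    rcases (pprod_nonneg fun i => x (j.succAbove i)).eq_or_lt with h | h
    · rw [h1, ← h, mul_zero] at hpos
      exact absurd hpos (lt_irrefl _)
    · exact h
  have h4 := le_of_mul_le_mul_right h3 hP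
  exact abs_le_of_sq_le_sq' h4 (Finset.prod_nonneg fun _ _ => norm_nonneg _) |>.2

/-! ### Exponential rates -/

/-- If `N² V - N L ≤ E N ≤ N² (V + ε₁)` for all `N`, with `ε₁` small compared with `ε`, then for
every `n` some increment `E (N + 1) - E N` with `n ≤ N < 2 n` is at most `2 n (V + ε) + O(1)`:
average the increments over a window of length proportional to `n`. -/
lemma exists_small_increment {V ε : ℝ} (hV : 0 ≤ V) (hε : 0 < ε) :
    ∃ ε₁, 0 < ε₁ ∧ ∀ L, 0 ≤ L → ∃ C, 0 ≤ C ∧ ∀ E : ℕ → ℝ,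
      (∀ N : ℕ, E N ≤ (N : ℝ) ^ 2 * (V + ε₁)) → (∀ N : ℕ, (N : ℝ) ^ 2 * V - N * L ≤ E N) →
      ∀ n : ℕ, 1 ≤ n → ∃ N, n ≤ N ∧ N + 1 ≤ 2 * n ∧ (E (N + 1) - E N) / 2 ≤ n * (V + ε) + C := by
  set e := min 1 (ε / (V + 1)) with he
  have he0 : 0 < e := by positivity
  have he1 : e ≤ 1 := min_le_left _ _
  have heV : e * V ≤ ε := by
    have h1 : e ≤ ε / (V + 1) := min_le_right _ _
    rw [le_div_iff₀ (by positivity)] at h1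
    nlinarith
  refine ⟨ε * e / 4, by positivity, fun L hL => ⟨V / 2 + L / (2 * e), by positivity,
    fun E hE1 hE2 n hn => ?_⟩⟩
  have hnr : (1 : ℝ) ≤ n := by exact_mod_cast hn
  set p := ⌈e * n⌉₊ with hp
  have hp1 : e * n ≤ p := Nat.le_ceil _
  have hp2 : (p : ℝ) < e * n + 1 := Nat.ceil_lt_add_one (by positivity)
  have hpn : p ≤ n := Nat.ceil_le.mpr (by nlinarith)
  have hp0 : 0 < p := Nat.ceil_pos.mpr (by positivity)
  have hpr : (0 : ℝ) < p := by exact_mod_cast hp0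
  have hpnr : (p : ℝ) ≤ n := by exact_mod_cast hpn
  set T := 2 * (n * (V + ε) + (V / 2 + L / (2 * e))) with hT
  have hsum : ∑ k ∈ Finset.range p, (E (n + k + 1) - E (n + k)) = E (n + p) - E n := by
    have := Finset.sum_range_sub (fun k => E (n + k)) p
    simpa [add_assoc] using this
  have hbound : E (n + p) - E n ≤ p * T := by
    have h1 := hE1 (n + p)
    have h2 := hE2 n
    push_cast at h1
    -- the three error terms, each compared with `p` times its share of `T`
    have h3 : ((n : ℝ) + p) ^ 2 * (ε * e / 4) ≤ p * (n * ε) := by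
      have h4 : ((n : ℝ) + p) ^ 2 ≤ 4 * n ^ 2 := by nlinarith
      calc ((n : ℝ) + p) ^ 2 * (ε * e / 4) ≤ (4 * (n : ℝ) ^ 2) * (ε * e / 4) := by gcongr
        _ = (e * n) * (n * ε) := by ring
        _ ≤ p * (n * ε) := by gcongr
    have h5 : (n : ℝ) * L ≤ p * (L / e) := by
      calc (n : ℝ) * L = (e * n) * (L / e) := by field_simp
        _ ≤ p * (L / e) := by gcongr
    have h6 : (p : ℝ) * V ≤ n * ε + V := by
      calc (p : ℝ) * V ≤ (e * n + 1) * V := by gcongr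
        _ = n * (e * V) + V := by ring
        _ ≤ n * ε + V := by gcongr
    have h7 : (p : ℝ) * (p * V) ≤ p * (n * ε + V) := by gcongr
    have h8 : (p : ℝ) * T = 2 * p * n * V + 2 * (p * (n * ε)) + p * V + p * (L / e) := by
      rw [hT]; field_simp; ring
    nlinarith
  have hex : ∃ k ∈ Finset.range p, E (n + k + 1) - E (n + k) ≤ T := by
    refine Finset.exists_le_of_sum_le ⟨0, Finset.mem_range.mpr hp0⟩ ?_
    rw [hsum, Finset.sum_const, Finset.card_range, nsmul_eq_mul]
    exact hbound
  obtain ⟨k, hk, hkT⟩ := hex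
  rw [Finset.mem_range] at hk
  exact ⟨n + k, by omega, by omega, by linarith⟩

/-- Exponential bounds for `a n` with rates arbitrarily close to `V`, whatever the constants in front,
determine the limit of the `n`-th roots. -/
lemma tendsto_root_of_rates {a : ℕ → ℝ} {V : ℝ}
    (hlow : ∀ ε, 0 < ε → ∃ c, 0 < c ∧ ∀ n : ℕ, 1 ≤ n → c * Real.exp (-(n * (V + ε))) ≤ a n)
    (hup : ∀ ε, 0 < ε → ∃ C, 0 < C ∧ ∀ n : ℕ, 1 ≤ n → a n ≤ C * Real.exp (-(n * (V - ε)))) :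
    Filter.Tendsto (fun n : ℕ => a n ^ ((n : ℝ)⁻¹)) Filter.atTop (nhds (Real.exp (-V))) := by
  have hpos : ∀ n : ℕ, 1 ≤ n → 0 < a n := by
    intro n hn
    obtain ⟨c, hc, h⟩ := hlow 1 one_pos
    exact lt_of_lt_of_le (by positivity) (h n hn)
  have hlog : Filter.Tendsto (fun n : ℕ => Real.log (a n) * (n : ℝ)⁻¹) Filter.atTop (nhds (-V)) := by
    rw [Metric.tendsto_atTop]
    intro ε hε
    obtain ⟨c, hc, hl⟩ := hlow (ε / 2) (by positivity)
    obtain ⟨C, hC, hu⟩ := hup (ε / 2) (by positivity)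
    obtain ⟨N, hN⟩ := exists_nat_gt ((|Real.log c| + |Real.log C|) / (ε / 2))
    refine ⟨N + 1, fun n hn => ?_⟩
    have hn1 : 1 ≤ n := by omega
    have hnr : (0 : ℝ) < n := by exact_mod_cast hn1
    have hNn : (N : ℝ) ≤ n := by exact_mod_cast (by omega : N ≤ n)
    have hbig : |Real.log c| + |Real.log C| < n * (ε / 2) := by
      rw [div_lt_iff₀ (by positivity)] at hN
      nlinarith
    have h1 := Real.log_le_log (by positivity) (hl n hn1)
    have h2 := Real.log_le_log (hpos n hn1) (hu n hn1)
    rw [Real.log_mul hc.ne' (Real.exp_pos _).ne', Real.log_exp] at h1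
    rw [Real.log_mul hC.ne' (Real.exp_pos _).ne', Real.log_exp] at h2
    have h3 := neg_abs_le (Real.log c)
    have h4 := le_abs_self (Real.log C)
    have h5 := abs_nonneg (Real.log c)
    have h6 := abs_nonneg (Real.log C)
    have h7 : Real.log (a n) * (n : ℝ)⁻¹ - -V = (Real.log (a n) + n * V) / n := by
      field_simp
      ring
    rw [Real.dist_eq, h7, abs_div, abs_of_pos hnr, div_lt_iff₀ hnr, abs_lt]
    constructor <;> nlinarith
  have hexp := (Real.continuous_exp.tendsto (-V)).comp hlog
  refine hexp.congr' ?_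
  filter_upwards [Filter.eventually_ge_atTop 1] with n hn
  rw [Real.rpow_def_of_pos (hpos n hn)]
  rfl

/-- The image of a disk under `φ` is connected, hence meets every small circle around each of
its points. -/
lemma exists_norm_sub_eq {φ : ℂ → ℂ} (hφ_diff : DifferentiableOn ℂ φ unitDisk) {r : ℝ} (hr : r < 1)
    {u₀ u₁ : ℂ} (hu₀ : ‖u₀‖ ≤ r) (hu₁ : ‖u₁‖ ≤ r) {a : ℂ} (ha : a ∈ φ '' Metric.closedBall 0 r)
    {t : ℝ} (ht : 0 < t) (ht2 : t ≤ ‖φ u₁ - φ u₀‖ / 2) :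
    ∃ ζ ∈ φ '' Metric.closedBall 0 r, ‖ζ - a‖ = t := by
  have hpre : IsPreconnected (φ '' Metric.closedBall 0 r) := by
    refine (convex_closedBall (0 : ℂ) r).isPreconnected.image _ (hφ_diff.continuousOn.mono ?_)
    intro z hz
    exact (mem_closedBall_zero_iff.mp hz).trans_lt hr
  have hfar : ∃ b ∈ φ '' Metric.closedBall 0 r, t ≤ ‖b - a‖ := by
    have h1 : ‖φ u₁ - φ u₀‖ ≤ ‖φ u₁ - a‖ + ‖φ u₀ - a‖ := by
      have := norm_sub_le (φ u₁ - a) (φ u₀ - a)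
      rwa [sub_sub_sub_cancel_right] at this
    rcases le_total ‖φ u₁ - a‖ ‖φ u₀ - a‖ with h | h
    · exact ⟨φ u₀, ⟨u₀, mem_closedBall_zero_iff.mpr hu₀, rfl⟩, by linarith⟩
    · exact ⟨φ u₁, ⟨u₁, mem_closedBall_zero_iff.mpr hu₁, rfl⟩, by linarith⟩
  obtain ⟨b, hb, hbt⟩ := hfar
  have hiv := hpre.intermediate_value ha hb (f := fun ζ => ‖ζ - a‖) (by fun_prop)
  obtain ⟨ζ, hζ, h⟩ := hiv (show t ∈ Set.Icc ‖a - a‖ ‖b - a‖ from ⟨by simpa using ht.le, hbt⟩)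
  exact ⟨ζ, hζ, h⟩

section Rates

variable {ω : ℝ → ℝ} {H : Type} [NormedAddCommGroup H] [InnerProductSpace ℂ H]
  {ι : H →ₗ[ℂ] (ℂ → ℂ)} {φ : ℂ → ℂ} {Cφ : H →L[ℂ] H}

/-- The lower bound for the approximation numbers. For given `n` it uses an extremal configuration of
`N + 1` points with `n ≤ N < 2 n` and a small increment of the minimal energies; the polynomial loss
in `N` is absorbed by `exp (n ε / 2)`. -/
lemma lower_rate (hω_cont : ContinuousOn ω (Set.Ico 0 1))
    (hω_pos : ∀ r ∈ Set.Ico (0:ℝ) 1, 0 < ω r) (hω_int : IntegrableOn ω (Set.Ico 0 1))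
    (hι_mem : ∀ g : H, memHw ω (ι g)) (hι_norm : ∀ g : H, ‖g‖ ^ 2 = hwNormSq ω (ι g))
    (hι_surj : ∀ f : ℂ → ℂ, memHw ω f → ∃ g : H, ∀ z ∈ unitDisk, ι g z = f z)
    (hφ_diff : DifferentiableOn ℂ φ unitDisk) (hφ_maps : Set.MapsTo φ unitDisk unitDisk)
    (hCφ : ∀ g : H, ∀ z ∈ unitDisk, ι (Cφ g) z = ι g (φ z))
    (hopen : ∀ s ⊆ unitDisk, IsOpen s → IsOpen (φ '' s))
    {r0 : ℝ} (hr0 : r0 < 1) (hφr : ∀ z ∈ unitDisk, ‖φ z‖ ≤ r0) {ε : ℝ} (hε : 0 < ε) :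
    ∃ c, 0 < c ∧ ∀ n : ℕ, 1 ≤ n →
      c * Real.exp (-(n * ((greenV (φ '' unitDisk)).toReal + ε))) ≤ approxNumber Cφ n := by
  set V := (greenV (φ '' unitDisk)).toReal with hV
  have hV0 : 0 ≤ V := ENNReal.toReal_nonneg
  obtain ⟨ε₁, hε₁, hinc⟩ := exists_small_increment hV0 (half_pos hε)
  obtain ⟨r, hr0', hr1, -, -, x, hxK, hmax, hpos, hE1, L, hL, hE2⟩ :=
    exists_extremal hφ_diff hφ_maps hopen hε₁ one_pos zero_lt_one
  obtain ⟨C, hC, hinc⟩ := hinc L hL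
  obtain ⟨c, hc, hlow⟩ := exists_lower_config hω_cont hω_pos hω_int hι_mem hι_norm hι_surj hφ_maps
    hCφ hr0' hr1 hr0
  refine ⟨c * Real.exp (-C) * (ε ^ 2 / 32), by positivity, fun n hn => ?_⟩
  obtain ⟨N, hN1, hN2, hN⟩ := hinc (fun N => -Real.log (pprod (x N))) hE1 hE2 n hn
  have hxr : ∀ i, ‖x (N + 1) i‖ ≤ r0 := by
    intro i
    obtain ⟨z, hz, h⟩ := hxK (N + 1) i
    rw [← h]
    exact hφr z ((mem_closedBall_zero_iff.mp hz).trans_lt hr1)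
  have h1 := hlow N (x (N + 1)) (hxK _) hxr _ fun j => exp_le_prod_of_extremal hxK hmax hpos N j
  have hnr : (0 : ℝ) < n := by exact_mod_cast hn
  have hNr : (N : ℝ) + 1 ≤ 2 * n := by exact_mod_cast hN2
  refine le_trans ?_ (h1.trans (approxNumber_anti Cφ hn (by omega)))
  have h2 : Real.exp (-(n * (V + ε / 2) + C)) ≤
      Real.exp (-((-Real.log (pprod (x (N + 1))) - -Real.log (pprod (x N))) / 2)) :=
    Real.exp_le_exp.mpr (by linarith)
  have h3 : (n * (ε / 2)) ^ 2 / 2 ≤ Real.exp (n * (ε / 2)) := by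
    have h4 := Real.quadratic_le_exp_of_nonneg (x := n * (ε / 2)) (by positivity)
    have h5 : 0 ≤ n * (ε / 2) := by positivity
    linarith
  have h6 : Real.exp (-(n * (V + ε / 2) + C)) =
      Real.exp (-C) * Real.exp (-(n * (V + ε))) * Real.exp (n * (ε / 2)) := by
    rw [← Real.exp_add, ← Real.exp_add]
    congr 1; ring
  calc c * Real.exp (-C) * (ε ^ 2 / 32) * Real.exp (-(n * (V + ε)))
      = c * (Real.exp (-C) * Real.exp (-(n * (V + ε))) * ((n * (ε / 2)) ^ 2 / 2)) / (2 * n) ^ 2 := by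
        field_simp
        ring
    _ ≤ c * (Real.exp (-C) * Real.exp (-(n * (V + ε))) * Real.exp (n * (ε / 2))) / (2 * n) ^ 2 := by
        gcongr
    _ = c * Real.exp (-(n * (V + ε / 2) + C)) / (2 * n) ^ 2 := by rw [h6]
    _ ≤ c * Real.exp (-((-Real.log (pprod (x (N + 1))) - -Real.log (pprod (x N))) / 2)) /
        ((N : ℝ) + 1) ^ 2 := by gcongr

/-- The upper bound for the approximation numbers. The Blaschke product of an extremal configuration
is small on the compact set `K`, and the two-constants estimate makes it small near `φ(D)`. The
points `0` and `u₁` with different images ensure that `K` is a nondegenerate continuum. -/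
lemma upper_rate [CompleteSpace H] (hω_cont : ContinuousOn ω (Set.Ico 0 1))
    (hω_pos : ∀ r ∈ Set.Ico (0:ℝ) 1, 0 < ω r)
    (hι_mem : ∀ g : H, memHw ω (ι g)) (hι_norm : ∀ g : H, ‖g‖ ^ 2 = hwNormSq ω (ι g))
    (hφ_mem : memHw ω φ) (hφ_maps : Set.MapsTo φ unitDisk unitDisk)
    (hCφ : ∀ g : H, ∀ z ∈ unitDisk, ι (Cφ g) z = ι g (φ z))
    (hopen : ∀ s ⊆ unitDisk, IsOpen s → IsOpen (φ '' s))
    {u₁ : ℂ} (hu₁ : u₁ ∈ unitDisk) (hne : φ u₁ ≠ φ 0)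
    {r0 : ℝ} (hr0 : 0 ≤ r0) (hr1 : r0 < 1) (hφr : ∀ z ∈ unitDisk, ‖φ z‖ ≤ r0)
    {ε : ℝ} (hε : 0 < ε) :
    ∃ C, 0 < C ∧ ∀ n : ℕ, 1 ≤ n →
      approxNumber Cφ n ≤ C * Real.exp (-(n * ((greenV (φ '' unitDisk)).toReal - ε))) := by
  set V := (greenV (φ '' unitDisk)).toReal with hV
  have hV0 : 0 ≤ V := ENNReal.toReal_nonneg
  obtain ⟨k, hk⟩ := exists_pow_lt_of_lt_one (show 0 < ε / 2 / (V + 1) by positivity)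
    (show (51 / 52 : ℝ) < 1 by norm_num)
  set η : ℝ := (51 / 52) ^ k with hη
  have hη0 : 0 < η := by positivity
  have hηV : η * V ≤ ε / 2 := by
    rw [lt_div_iff₀ (by positivity)] at hk
    nlinarith
  have hη1 : η ≤ 1 := pow_le_one₀ (by norm_num) (by norm_num)
  obtain ⟨C1, hC1, htwo⟩ := exists_two_constants k
  have hd : 0 < ‖φ u₁ - φ 0‖ := norm_pos_iff.mpr (sub_ne_zero.mpr hne)
  set s := min (‖φ u₁ - φ 0‖ / 2) ((1 - r0) / 2) with hs
  have hs0 : 0 < s := lt_min (by positivity) (by linarith)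
  have hs1 : s ≤ ‖φ u₁ - φ 0‖ / 2 := min_le_left _ _
  have hs2 : s ≤ (1 - r0) / 2 := min_le_right _ _
  set δ := s / 5 ^ k / 2 with hδ
  have hδ0 : 0 < δ := by positivity
  have hδs : δ ≤ s / 2 := by
    rw [hδ]
    gcongr
    exact div_le_self hs0.le (one_le_pow₀ (by norm_num))
  obtain ⟨r, hr0', hr1', hur, hdense, x, hxK, hmax, hpos, -, L, hL, hE2⟩ :=
    exists_extremal hφ_mem.1 hφ_maps hopen one_pos hδ0 (show ‖u₁‖ < 1 from hu₁)
  set K := φ '' Metric.closedBall 0 r with hK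
  have hKr : ∀ a ∈ K, ‖a‖ ≤ r0 := by
    rintro _ ⟨z, hz, rfl⟩
    exact hφr z ((mem_closedBall_zero_iff.mp hz).trans_lt hr1')
  obtain ⟨C2, hC2, hup⟩ := exists_upper_config hω_cont hω_pos hι_mem hι_norm hφ_mem hφ_maps hCφ
    hr0 hδ0 (by linarith) (half_pos hε) hφr
  refine ⟨C2 * C1 * Real.exp L, by positivity, fun n hn => ?_⟩
  obtain ⟨m, rfl⟩ := Nat.exists_eq_add_of_le' hn
  set A := max (((m : ℝ) + 1) * V - L) 0 with hA
  have hA0 : 0 ≤ A := le_max_right _ _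
  have hmr : (0 : ℝ) ≤ m := Nat.cast_nonneg m
  have hxr : ∀ i, ‖x (m + 1) i‖ ≤ r0 := fun i => hKr _ (hxK _ i)
  have hE0 : 0 ≤ -Real.log (pprod (x (m + 1))) := neg_nonneg.mpr
    (Real.log_nonpos (hpos _).le (pprod_le_one fun i => (hxr i).trans_lt hr1))
  have hAE : ((m : ℝ) + 1) * A ≤ -Real.log (pprod (x (m + 1))) := by
    rcases le_total (((m : ℝ) + 1) * V - L) 0 with h | h
    · rw [hA, max_eq_right h, mul_zero]
      exact hE0
    · rw [hA, max_eq_left h]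
      refine le_trans (le_of_eq ?_) (hE2 (m + 1))
      push_cast; ring
  obtain ⟨j, hj⟩ := exists_prod_le_of_extremal (hxK (m + 1)) (hmax (m + 1)) (hpos (m + 1)) hAE
  have hB := prod_bf_bounds hr1 (x := fun i => x (m + 1) (j.succAbove i)) fun i => hxr _
  set M := C1 * Real.exp (-((1 - η) * A)) with hM
  have hMx : ∀ z ∈ φ '' unitDisk, ∀ t ∈ Metric.closedBall z δ,
      ∏ i, ‖bf (x (m + 1) (j.succAbove i)) t‖ ≤ M := by
    intro z hz t ht
    obtain ⟨a, ha, hza⟩ := hdense z hz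
    have hta : t ∈ Metric.closedBall a (s / 5 ^ k) := by
      rw [Metric.mem_closedBall] at ht ⊢
      have h1 := dist_triangle t z a
      have h2 : s / 5 ^ k = δ + δ := by rw [hδ]; ring
      linarith
    have has : Metric.closedBall a s ⊆ unitDisk := by
      intro w hw
      have h1 := norm_sub_norm_le w a
      rw [Metric.mem_closedBall, dist_eq_norm] at hw
      change ‖w‖ < 1
      linarith [hKr a ha]
    have h1 := htwo unitDisk isOpen_unitDisk a s hs0 has K
      (fun t ht ht' => exists_norm_sub_eq hφ_mem.1 hr1' (by simpa using hr0') hur ha ht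
        (ht'.trans hs1)) _ hB.1 A hA0 (fun z hz => hB.2.1 z (has hz))
      (fun z hz => by rw [norm_prod]; exact hj z hz) t hta
    rwa [norm_prod] at h1
  have hinj : Function.Injective fun i => x (m + 1) (j.succAbove i) :=
    (injective_of_pprod_pos (hpos (m + 1))).comp Fin.succAbove_right_injective
  have h1 := hup m _ hinj (fun i => hxr _) M (by positivity) hMx
  refine h1.trans ?_
  have h2 : (m : ℝ) * (ε / 2) + -((1 - η) * A) ≤ L + -(((m : ℝ) + 1) * (V - ε)) := by
    have h3 : ((m : ℝ) + 1) * V - L ≤ A := le_max_left _ _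
    have h4 : (1 - η) * (((m : ℝ) + 1) * V - L) ≤ (1 - η) * A :=
      mul_le_mul_of_nonneg_left h3 (by linarith)
    have h5 : ((m : ℝ) + 1) * (η * V) ≤ ((m : ℝ) + 1) * (ε / 2) := by gcongr
    nlinarith [mul_nonneg hη0.le hL]
  calc C2 * (Real.exp (m * (ε / 2)) * M)
      = C2 * C1 * Real.exp ((m : ℝ) * (ε / 2) + -((1 - η) * A)) := by
        rw [hM, Real.exp_add]; ring
    _ ≤ C2 * C1 * Real.exp (L + -(((m : ℝ) + 1) * (V - ε))) := by gcongr
    _ = _ := by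
        rw [Real.exp_add]; push_cast; ring

end Rates

/-- Every measure on a one-point set has infinite Green energy. -/
lemma greenV_singleton (p : ℂ) : greenV {p} = ⊤ := by
  refine iInf_eq_top.mpr fun μ => iInf_eq_top.mpr fun hμ => iInf_eq_top.mpr ?_
  rintro ⟨K, hK, -, hμK⟩
  have h1 : μ {p}ᶜ = 0 := measure_mono_null (Set.compl_subset_compl.mpr hK) hμK
  have hae : ∀ᵐ z ∂μ, z = p := by rw [ae_iff]; exact h1
  have h2 : ∀ᵐ z ∂μ, ∫⁻ w, greenFnE z w ∂μ = ⊤ := by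
    filter_upwards [hae] with z hz
    have : ∀ᵐ w ∂μ, greenFnE z w = ⊤ := by
      filter_upwards [hae] with w hw
      rw [hz, hw, greenFnE, if_pos rfl]
    rw [lintegral_congr_ae this]
    simp
  rw [greenEnergy, lintegral_congr_ae h2]
  simp

/-- Nonempty open subsets of the disk carry a measure of finite Green energy. -/
lemma greenV_ne_top_of_isOpen {G : Set ℂ} (hG : IsOpen G) (hGD : G ⊆ unitDisk) {p : ℂ}
    (hp : p ∈ G) : greenV G ≠ ⊤ := by
  obtain ⟨s, hs, hsG⟩ := Metric.nhds_basis_closedBall.mem_iff.mp (hG.mem_nhds hp)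
  refine ne_top_of_le_ne_top ENNReal.ofReal_ne_top
    (greenV_le_of_config hGD hs one_pos (x := fun _ : Fin 1 => p) (fun _ => hsG) ?_)
  simp [pprod]

lemma exists_radius_of_closure {φ : ℂ → ℂ} (hφ_clos : closure (φ '' unitDisk) ⊆ unitDisk) :
    ∃ r0, 0 ≤ r0 ∧ r0 < 1 ∧ ∀ z ∈ unitDisk, ‖φ z‖ ≤ r0 := by
  have hcpt : IsCompact (closure (φ '' unitDisk)) := by
    refine Metric.isCompact_of_isClosed_isBounded isClosed_closure ?_
    rw [unitDisk_eq_ball] at hφ_clos ⊢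
    exact Metric.isBounded_ball.subset hφ_clos
  have hne : (closure (φ '' unitDisk)).Nonempty :=
    ⟨φ 0, subset_closure ⟨0, zero_mem_unitDisk, rfl⟩⟩
  obtain ⟨p, hp, hmax⟩ := hcpt.exists_isMaxOn hne (f := fun z => ‖z‖) (by fun_prop)
  exact ⟨‖p‖, norm_nonneg _, hφ_clos hp, fun z hz => hmax (subset_closure ⟨z, hz, rfl⟩)⟩

/-- For a symbol `φ` of a weighted analytic Hilbert space `H_ω` with
`closure (φ(D)) ⊆ D`, the limit `β(C_φ) = lim aₙ(C_φ)^{1/n}` exists and equals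
`e^{-1/capa(φ(D))}`. -/
theorem beta_eq_expNegV_of_weighted
    (ω : ℝ → ℝ)
    (hω_cont : ContinuousOn ω (Set.Ico 0 1))
    (hω_pos : ∀ r ∈ Set.Ico (0:ℝ) 1, 0 < ω r)
    (hω_int : IntegrableOn ω (Set.Ico 0 1))
    (H : Type) [NormedAddCommGroup H] [InnerProductSpace ℂ H] [CompleteSpace H]
    (ι : H →ₗ[ℂ] (ℂ → ℂ))
    (hι_mem : ∀ g : H, memHw ω (ι g))
    (hι_norm : ∀ g : H, ‖g‖ ^ 2 = hwNormSq ω (ι g))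
    (hι_surj : ∀ f : ℂ → ℂ, memHw ω f → ∃ g : H, ∀ z ∈ unitDisk, ι g z = f z)
    (hι_inj : ∀ g : H, (∀ z ∈ unitDisk, ι g z = 0) → g = 0)
    (φ : ℂ → ℂ)
    (hφ_diff : DifferentiableOn ℂ φ unitDisk)
    (hφ_maps : Set.MapsTo φ unitDisk unitDisk)
    (hφ_symbol : ∀ f : ℂ → ℂ, memHw ω f → memHw ω (f ∘ φ))
    (hφ_clos : closure (φ '' unitDisk) ⊆ unitDisk)
    (Cφ : H →L[ℂ] H)
    (hCφ : ∀ g : H, ∀ z ∈ unitDisk, ι (Cφ g) z = ι g (φ z)) :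
    Filter.Tendsto (fun n : ℕ => approxNumber Cφ n ^ ((n : ℝ)⁻¹)) Filter.atTop
      (nhds (expNegV (φ '' unitDisk))) := by
  obtain ⟨r0, hr0, hr1, hφr⟩ := exists_radius_of_closure hφ_clos
  have hφ_mem : memHw ω φ := by
    refine hφ_symbol (fun z => z) (memHw_of_deriv_bound (D := 1) hω_cont hω_pos hω_int
      differentiableOn_id fun z _ => ?_)
    simp
  by_cases hconst : ∀ z ∈ unitDisk, φ z = φ 0
  · have himg : φ '' unitDisk = {φ 0} := by
      refine Set.Subset.antisymm ?_ (Set.singleton_subset_iff.mpr ⟨0, zero_mem_unitDisk, rfl⟩)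
      rintro _ ⟨z, hz, rfl⟩
      exact hconst z hz
    obtain ⟨C, -, hev⟩ := exists_evalCLM hω_cont hω_pos hι_mem hι_norm hr0 hr1
    obtain ⟨ev, hev⟩ := hev (φ 0) (hφr 0 zero_mem_unitDisk)
    -- `C_φ` has rank at most one: it kills the kernel of the evaluation at `φ 0`
    have h2 : approxNumber Cφ 2 ≤ 0 := by
      refine approxNumber_le_of_functionals (m := 1) Cφ (fun _ => ev) le_rfl fun g hg => ?_
      have h0 : ι g (φ 0) = 0 := by rw [← (hev g).1]; exact hg 0
      have h1 : Cφ g = 0 := hι_inj _ fun z hz => by rw [hCφ g z hz, hconst z hz, h0]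
      simp [h1]
    rw [himg, expNegV, if_pos (greenV_singleton _)]
    refine tendsto_const_nhds.congr' ?_
    filter_upwards [Filter.eventually_ge_atTop 2] with n hn
    have h0 : approxNumber Cφ n = 0 :=
      le_antisymm ((approxNumber_anti Cφ two_pos hn).trans h2) (approxNumber_nonneg _ _)
    have hn0 : (n : ℝ) ≠ 0 := by exact_mod_cast (by omega : n ≠ 0)
    rw [h0, Real.zero_rpow (inv_ne_zero hn0)]
  · push Not at hconst
    obtain ⟨u₁, hu₁, hne⟩ := hconst
    have hopen : ∀ s ⊆ unitDisk, IsOpen s → IsOpen (φ '' s) := by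
      have hpre : IsPreconnected unitDisk := by
        rw [unitDisk_eq_ball]
        exact (convex_ball (0 : ℂ) 1).isPreconnected
      rcases (hφ_diff.analyticOnNhd isOpen_unitDisk).is_constant_or_isOpen hpre with ⟨w, hw⟩ | h
      · exact absurd ((hw u₁ hu₁).trans (hw 0 zero_mem_unitDisk).symm) hne
      · exact h
    rw [expNegV, if_neg (greenV_ne_top_of_isOpen (hopen _ subset_rfl isOpen_unitDisk)
      (Set.image_subset_iff.mpr hφ_maps) ⟨0, zero_mem_unitDisk, rfl⟩)]
    exact tendsto_root_of_rates
      (fun ε hε => lower_rate hω_cont hω_pos hω_int hι_mem hι_norm hι_surj hφ_diff hφ_maps hCφ hopen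
        hr1 hφr hε)
      (fun ε hε => upper_rate hω_cont hω_pos hι_mem hι_norm hφ_mem hφ_maps hCφ hopen hu₁ hne
        hr0 hr1 hφr hε)

end
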